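/- Consider the stochastic regression model X_{n+1} = θ^t Φ_n + ε_{n+1} with least squares estimator θ̂_n. Let p ≥ 1 be an integer and assume (ε_n) is a martingale difference sequence with E[ε_{n+1}² | F_n] = σ² a.s., sup_{n≥0} E[|ε_{n+1}|^a | F_n] < ∞ a.s. for some a > 2p, the explosion coefficient f_n → 0 a.s., S_n/α_n → L a.s. for some positive random sequence (α_n) increasing to infinity and some symmetric positive definite matrix L, and that for some integer 1 ≤ q ≤ p, E[ε_{n+1}^{2q} | F_n] = σ(2q) a.s. If in addition log d_n = o(n^c) a.s. for some c with 2p/a < c < 1, then the cumulative prediction error C_n(q) = Σ_{k=0}^{n-1} (X_{k+1} − θ̂_k^t Φ_k)^{2q} satisfies |C_n(q)/n − σ(2q)|² = o(n^{c−1}) almost surely. -/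

import Mathlib

open MeasureTheory ProbabilityTheory Filter Finset Matrix Topology Asymptotics

noncomputable section

/-- `S_n = S + ∑_{k=0}^n Φ_k Φ_kᵗ`. -/
def Smat {Ω : Type*} {d : ℕ} (S : Matrix (Fin d) (Fin d) ℝ)
    (Φ : ℕ → Ω → Fin d → ℝ) (n : ℕ) (ω : Ω) : Matrix (Fin d) (Fin d) ℝ :=
  S + ∑ k ∈ Finset.range (n + 1), vecMulVec (Φ k ω) (Φ k ω)

/-- The explosion coefficient `f_n = Φ_nᵗ S_n⁻¹ Φ_n`. -/
def expl {Ω : Type*} {d : ℕ} (S : Matrix (Fin d) (Fin d) ℝ)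
    (Φ : ℕ → Ω → Fin d → ℝ) (n : ℕ) (ω : Ω) : ℝ :=
  Φ n ω ⬝ᵥ ((Smat S Φ n ω)⁻¹ *ᵥ Φ n ω)

/-- The least squares estimator `θ̂_n = S_{n-1}⁻¹ ∑_{k=1}^n Φ_{k-1} X_k`. -/
def lsq {Ω : Type*} {d : ℕ} (S : Matrix (Fin d) (Fin d) ℝ)
    (Φ : ℕ → Ω → Fin d → ℝ) (X : ℕ → Ω → ℝ) (n : ℕ) (ω : Ω) : Fin d → ℝ :=
  (Smat S Φ (n - 1) ω)⁻¹ *ᵥ ∑ k ∈ Finset.Icc 1 n, X k ω • Φ (k - 1) ω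


lemma young_nat (m : ℕ) (i : ℕ) (hi : i < m) (δ : ℝ) (hδ : 0 < δ) :
    ∃ C : ℝ, 0 ≤ C ∧ ∀ x y : ℝ, 0 ≤ x → 0 ≤ y → x ^ i * y ^ (m - i) ≤ δ * x ^ m + C * y ^ m := by
  obtain ⟨η, hη0, hη1, hηδ⟩ : ∃ η : ℝ, 0 < η ∧ η ≤ 1 ∧ η ≤ δ :=
    ⟨min 1 δ, by positivity, min_le_left _ _, min_le_right _ _⟩
  refine ⟨(η⁻¹) ^ i, by positivity, fun x y hx hy => ?_⟩
  have hm : m = i + (m - i) := by omega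
  rcases le_total y (η * x) with h | h
  · have h1 : y ^ (m - i) ≤ η * x ^ (m - i) := by
      calc y ^ (m - i) ≤ (η * x) ^ (m - i) := by gcongr
        _ = η ^ (m - i) * x ^ (m - i) := mul_pow _ _ _
        _ ≤ η * x ^ (m - i) := by
          gcongr
          exact pow_le_of_le_one hη0.le hη1 (by omega)
    calc x ^ i * y ^ (m - i) ≤ x ^ i * (η * x ^ (m - i)) := by gcongr
      _ = η * x ^ m := by conv_rhs => rw [hm, pow_add]
                          ring
      _ ≤ δ * x ^ m := by gcongr
      _ ≤ _ := by have : 0 ≤ (η⁻¹) ^ i * y ^ m := by positivity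
                  linarith
  · have h1 : x ≤ η⁻¹ * y := by
      rw [inv_mul_eq_div, le_div_iff₀ hη0]; linarith
    calc x ^ i * y ^ (m - i) ≤ (η⁻¹ * y) ^ i * y ^ (m - i) := by gcongr
      _ = (η⁻¹) ^ i * y ^ m := by conv_rhs => rw [hm, pow_add]
                                  ring
      _ ≤ _ := by have : 0 ≤ δ * x ^ m := by positivity
                  linarith

lemma lyap_aux (q : ℕ) (δ : ℝ) (hδ : 0 < δ) :
    ∃ C : ℝ, 0 ≤ C ∧ ∀ w g u e : ℝ, 0 ≤ w → 0 ≤ g → g ≤ 1 → u ^ 2 ≤ g * w →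
      (w + 2 * u * e + g * e ^ 2) ^ (q + 1) ≤ w ^ (q + 1) + 2 * (q + 1) * w ^ q * u * e
        + g * (δ * w ^ (q + 1) + C * (e ^ 2) ^ (q + 1)) := by
  induction q generalizing δ with
  | zero =>
    refine ⟨1, by norm_num, fun w g u e hw hg0 hg1 hu => ?_⟩
    have : 0 ≤ g * (δ * w) := by positivity
    norm_num
    nlinarith
  | succ q ih =>
    obtain ⟨C, hC0, hC⟩ := ih (δ / 4) (by positivity)
    set m := q + 1 with hm
    obtain ⟨C1, hC10, hC1⟩ := young_nat (m + 1) m (by omega) (δ / 8 / (5 * m + 1 + δ)) (by positivity)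
    obtain ⟨C2, hC20, hC2⟩ := young_nat (m + 1) q (by omega) (δ / 8 / m) (by positivity)
    obtain ⟨C3, hC30, hC3⟩ := young_nat (m + 1) 1 (by omega) (δ / 8 / (2 * C + 1)) (by positivity)
    refine ⟨(5 * m + 1 + δ) * C1 + m * C2 + (2 * C + 1) * C3 + 2 * C, by positivity,
      fun w g u e hw hg0 hg1 hu => ?_⟩
    have h0 : 0 ≤ w + 2 * u * e + g * e ^ 2 := by
      rcases hg0.eq_or_lt with h | h
      · subst h
        have : u = 0 := by nlinarith [sq_nonneg u]
        subst this; simpa using hw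
      · have : 0 ≤ g * (w + 2 * u * e + g * e ^ 2) := by nlinarith [sq_nonneg (u + g * e)]
        exact nonneg_of_mul_nonneg_right this h
    have huw : u ^ 2 ≤ w := by nlinarith
    have hue : |u * e| ≤ (w + e ^ 2) / 2 := by
      rw [abs_mul]; nlinarith [sq_nonneg (|u| - |e|), sq_abs u, sq_abs e]
    have hup : w + 2 * u * e + g * e ^ 2 ≤ 2 * w + 2 * e ^ 2 := by
      have := le_abs_self (u * e)
      nlinarith [sq_nonneg e]
    set y := e ^ 2 with hy
    have hy0 : 0 ≤ y := by positivity
    have k1 := hC1 w y hw hy0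
    have k2 := hC2 w y hw hy0
    have k3 := hC3 w y hw hy0
    have e1 : m + 1 - m = 1 := by omega
    have e2 : m + 1 - q = 2 := by omega
    have e3 : m + 1 - 1 = m := by omega
    rw [e1, pow_one] at k1
    rw [e2] at k2
    rw [e3, pow_one] at k3
    have k1' : (5 * m + 1 + δ) * (w ^ m * y) ≤ δ / 8 * w ^ (m + 1) + (5 * m + 1 + δ) * C1 * y ^ (m+1) := by
      calc _ ≤ (5 * m + 1 + δ) * (δ / 8 / (5 * m + 1 + δ) * w ^ (m + 1) + C1 * y ^ (m + 1)) := by gcongr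
        _ = _ := by field_simp
    have k2' : m * (w ^ q * y ^ 2) ≤ δ / 8 * w ^ (m + 1) + m * C2 * y ^ (m+1) := by
      have : (0:ℝ) < m := by positivity
      calc _ ≤ m * (δ / 8 / m * w ^ (m + 1) + C2 * y ^ (m + 1)) := by gcongr
        _ = _ := by field_simp
    have k3' : (2 * C + 1) * (w * y ^ m) ≤ δ / 8 * w ^ (m + 1) + (2 * C + 1) * C3 * y ^ (m+1) := by
      calc _ ≤ (2 * C + 1) * (δ / 8 / (2 * C + 1) * w ^ (m + 1) + C3 * y ^ (m + 1)) := by gcongr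
        _ = _ := by field_simp
    have hI := hC w g u e hw hg0 hg1 hu
    rw [← hy] at hI
    have hm' : ((q : ℝ) + 1) = m := by rw [hm]; push_cast; ring
    rw [hm'] at hI
    -- the three cross terms
    have t1 : 4 * m * w ^ q * (u ^ 2 * y) ≤ g * (4 * m * (w ^ m * y)) := by
      calc 4 * m * w ^ q * (u ^ 2 * y) ≤ 4 * m * w ^ q * ((g * w) * y) := by gcongr
        _ = _ := by rw [hm, pow_succ w q]; ring
    have t2 : 2 * m * w ^ q * (u * e) * (g * y) ≤ g * (m * (w ^ m * y) + m * (w ^ q * y ^ 2)) := by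
      calc 2 * m * w ^ q * (u * e) * (g * y) ≤ 2 * m * w ^ q * ((w + y) / 2) * (g * y) := by
            gcongr; exact (le_abs_self _).trans hue
        _ = _ := by rw [hm, pow_succ w q]; ring
    have t3 : g * (δ / 4 * w ^ m + C * y ^ m) * (w + 2 * u * e + g * y)
        ≤ g * (δ / 4 * w ^ m + C * y ^ m) * (2 * w + 2 * y) := by gcongr
    have t4 : (0:ℝ) ≤ w * y ^ m := by positivity
    have t5 : (0:ℝ) ≤ w ^ m * y := by positivity
    calc (w + 2 * u * e + g * y) ^ (m + 1) = (w + 2 * u * e + g * y) ^ m * (w + 2 * u * e + g * y) := pow_succ _ _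
      _ ≤ (w ^ m + 2 * m * w ^ q * u * e + g * (δ / 4 * w ^ m + C * y ^ m)) * (w + 2 * u * e + g * y) := by
          gcongr
      _ = w ^ (m + 1) + 2 * (m + 1) * w ^ m * u * e + g * (w ^ m * y)
          + 4 * m * w ^ q * (u ^ 2 * y) + 2 * m * w ^ q * (u * e) * (g * y)
          + g * (δ / 4 * w ^ m + C * y ^ m) * (w + 2 * u * e + g * y) := by
          rw [hy, hm, pow_succ w (q+1), pow_succ w q]; ring
      _ ≤ w ^ (m + 1) + 2 * (m + 1) * w ^ m * u * e + g * (w ^ m * y)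
          + g * (4 * m * (w ^ m * y)) + g * (m * (w ^ m * y) + m * (w ^ q * y ^ 2))
          + g * (δ / 4 * w ^ m + C * y ^ m) * (2 * w + 2 * y) := by gcongr
      _ = w ^ (m + 1) + 2 * (m + 1) * w ^ m * u * e +
          g * ((5 * m + 1 + δ / 2) * (w ^ m * y) + m * (w ^ q * y ^ 2) + 2 * C * (w * y ^ m)
            + δ / 2 * w ^ (m + 1) + 2 * C * y ^ (m + 1)) := by
          rw [pow_succ w m, pow_succ y m]; ring
      _ ≤ _ := by
          push_cast
          have : 0 ≤ w ^ (m+1) := by positivity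
          refine add_le_add le_rfl (mul_le_mul_of_nonneg_left ?_ hg0)
          nlinarith [mul_nonneg hδ.le t5, mul_nonneg hδ.le this]

lemma vbe {r : ℝ} (hr1 : 1 ≤ r) (hr2 : r ≤ 2) (x y : ℝ) :
    |x + y| ^ r ≤ |x| ^ r + r * (|x| ^ (r - 1) * SignType.sign x) * y + 6 * |y| ^ r := by
  have key : ∀ x y : ℝ, 0 < x → |x + y| ^ r ≤ |x| ^ r + r * |x| ^ (r - 1) * y + 6 * |y| ^ r := by
    intro x y hx
    rw [abs_of_pos hx]
    have hxr : x ^ r = x ^ (r - 1) * x := by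
      rw [← Real.rpow_add_one hx.ne']; congr 1; ring
    rcases le_total |y| x with h | h
    · obtain ⟨hy1, hy2⟩ := abs_le.1 h
      have hxy : 0 ≤ x + y := by linarith
      rw [abs_of_nonneg hxy]
      set t := y / x with ht
      have hyt : y = x * t := by rw [ht]; field_simp
      have ht1 : -1 ≤ t := by rw [ht, le_div_iff₀ hx]; linarith
      have ht2 : |t| ≤ 1 := by rw [ht, abs_div, abs_of_pos hx, div_le_one hx]; exact h
      have ht0 : 0 ≤ 1 + t := by linarith
      have e1 : (1 + t) ^ r ≤ 1 + r * t + |t| ^ r := by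
        have : (1 + t) ^ r = (1 + t) * (1 + t) ^ (r - 1) := by
          rcases ht0.eq_or_lt with h0 | h0
          · rw [← h0, Real.zero_rpow (by linarith)]; ring
          · rw [mul_comm, ← Real.rpow_add_one h0.ne']; congr 1; ring
        have b := rpow_one_add_le_one_add_mul_self ht1 (p := r - 1) (by linarith) (by linarith)
        have c : t ^ 2 ≤ |t| ^ r := by
          rw [← sq_abs, ← Real.rpow_natCast]
          apply Real.rpow_le_rpow_of_exponent_ge_of_imp (abs_nonneg _) ht2 (by simpa using hr2)
          intro _ h; norm_num at h
        rw [this]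
        nlinarith [mul_le_mul_of_nonneg_left b ht0, sq_nonneg t]
      have e2 : (x + y) ^ r = x ^ r * (1 + t) ^ r := by
        rw [← Real.mul_rpow hx.le ht0]; congr 1; rw [hyt]; ring
      have e3 : |y| ^ r = x ^ r * |t| ^ r := by
        rw [← Real.mul_rpow hx.le (abs_nonneg _), hyt, abs_mul, abs_of_pos hx]
      have : 0 ≤ x ^ r := by positivity
      have h5 : 0 ≤ |y| ^ r := by positivity
      calc (x + y) ^ r = x ^ r * (1 + t) ^ r := e2
        _ ≤ x ^ r * (1 + r * t + |t| ^ r) := by gcongr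
        _ = x ^ r + r * x ^ (r - 1) * y + |y| ^ r := by rw [e3, hyt, hxr]; ring
        _ ≤ _ := by linarith
    · have hy0 : 0 < |y| := lt_of_lt_of_le hx h
      have e1 : |x + y| ^ r ≤ 4 * |y| ^ r := by
        calc |x + y| ^ r ≤ (2 * |y|) ^ r := by
              gcongr
              calc |x + y| ≤ |x| + |y| := abs_add_le _ _
                _ ≤ _ := by rw [abs_of_pos hx]; linarith
          _ = 2 ^ r * |y| ^ r := Real.mul_rpow (by norm_num) (abs_nonneg _)
          _ ≤ 2 ^ (2:ℝ) * |y| ^ r := by gcongr; norm_num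
          _ = _ := by norm_num
      have e2 : |r * x ^ (r - 1) * y| ≤ 2 * |y| ^ r := by
        have : |y| ^ r = |y| ^ (r - 1) * |y| := by
          rw [← Real.rpow_add_one hy0.ne']; congr 1; ring
        rw [abs_mul, abs_of_nonneg (by positivity), this]
        calc r * x ^ (r - 1) * |y| ≤ 2 * |y| ^ (r - 1) * |y| := by
              gcongr
          _ = _ := by ring
      have := (abs_le.1 e2).1
      have h5 : 0 ≤ x ^ r := by positivity
      linarith
  rcases lt_trichotomy x 0 with h | h | h
  · have := key (-x) (-y) (by linarith)
    rw [show -x + -y = -(x + y) by ring, abs_neg, abs_neg, abs_neg] at this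
    rw [sign_neg h]; simp only [SignType.coe_neg, SignType.coe_one]; linarith
  · subst h
    simp only [zero_add, abs_zero, sign_zero, SignType.coe_zero, mul_zero, zero_mul, add_zero]
    have : 0 ≤ |y| ^ r := by positivity
    have h2 : (0:ℝ) ≤ 0 ^ r := by positivity
    linarith
  · have := key x y h
    rw [sign_pos h]; simp only [SignType.coe_one, mul_one]; exact this

lemma kronecker {x : ℕ → ℝ} {γ T : ℝ} (hγ : 0 < γ)
    (h : Tendsto (fun n => ∑ k ∈ range n, x k / ((k:ℝ) + 1) ^ γ) atTop (𝓝 T)) :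
    (fun n => ∑ k ∈ range n, x k) =o[atTop] fun n : ℕ => (n:ℝ) ^ γ := by
  set D : ℕ → ℝ := fun n => (∑ k ∈ range n, x k / ((k:ℝ) + 1) ^ γ) - T with hD
  have hD0 : Tendsto D atTop (𝓝 0) := by simpa [hD] using h.sub_const T
  set dd : ℕ → ℝ := fun k => ((k:ℝ) + 1) ^ γ - (k:ℝ) ^ γ with hdd
  have hsum : ∀ n, ∑ k ∈ range n, dd k = (n:ℝ) ^ γ := by
    intro n
    have := Finset.sum_range_sub (fun k : ℕ => (k:ℝ) ^ γ) n
    simp only [Nat.cast_add, Nat.cast_one, Nat.cast_zero, Real.zero_rpow hγ.ne', sub_zero] at this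
    exact this
  have hid : ∀ n, ∑ k ∈ range n, x k = (n:ℝ) ^ γ * D n - ∑ k ∈ range n, dd k * D k := by
    intro n
    induction n with
    | zero => simp [Real.zero_rpow hγ.ne']
    | succ n ih =>
      have : (0:ℝ) < ((n:ℝ) + 1) ^ γ := by positivity
      rw [sum_range_succ, ih, sum_range_succ]
      have e : D (n + 1) = D n + x n / ((n:ℝ) + 1) ^ γ := by
        simp only [hD, sum_range_succ]; ring
      rw [e]; push_cast; simp only [hdd]; field_simp; ring
  have h1 : (fun n : ℕ => (n:ℝ) ^ γ * D n) =o[atTop] fun n : ℕ => (n:ℝ) ^ γ := by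
    simpa using (isBigO_refl (fun n : ℕ => (n:ℝ) ^ γ) atTop).mul_isLittleO
      ((isLittleO_one_iff ℝ).2 hD0)
  have h2 : (fun n => ∑ k ∈ range n, dd k * D k) =o[atTop] fun n => ∑ k ∈ range n, dd k := by
    apply IsLittleO.sum_range
    · simpa using (isBigO_refl dd atTop).mul_isLittleO ((isLittleO_one_iff ℝ).2 hD0)
    · intro k
      simp only [hdd, Pi.zero_apply, sub_nonneg]
      gcongr; linarith
    · simp_rw [hsum]
      exact (tendsto_rpow_atTop hγ).comp tendsto_natCast_atTop_atTop
  simp_rw [hsum] at h2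
  simp_rw [hid]
  exact h1.sub h2

lemma abel_summable {g : ℕ → ℝ} {c c' : ℝ} (hg : ∀ k, 0 ≤ g k) (hc : 0 < c) (hcc : c < c')
    (h : (fun n => ∑ k ∈ range n, g k) =o[atTop] fun n : ℕ => (n:ℝ) ^ c) :
    Summable fun k : ℕ => g k / ((k:ℝ) + 1) ^ c' := by
  obtain ⟨C, hC0, hC⟩ : ∃ C : ℝ, 0 ≤ C ∧ ∀ n : ℕ, ∑ k ∈ range (n + 1), g k ≤ C * ((n:ℝ) + 1) ^ c := by
    obtain ⟨C, hC⟩ := (Asymptotics.bound_of_isBigO_nat_atTop h.isBigO)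
    refine ⟨C, hC.1.le, fun n => ?_⟩
    have := hC.2 (x := n + 1) (by positivity)
    rw [Real.norm_of_nonneg (sum_nonneg fun i _ => hg i), Real.norm_of_nonneg (by positivity)] at this
    exact_mod_cast this
  have hdiff : ∀ k : ℕ, (((k:ℝ) + 1) ^ c')⁻¹ - (((k:ℝ) + 2) ^ c')⁻¹ ≤ c' * (((k:ℝ) + 1) ^ (c' + 1))⁻¹ := by
    intro k
    have hk : (0:ℝ) < (k:ℝ) + 1 := by positivity
    have hl : Real.log (((k:ℝ) + 2) / ((k:ℝ) + 1)) ≤ 1 / ((k:ℝ) + 1) := by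
      have := Real.log_le_sub_one_of_pos (show 0 < ((k:ℝ) + 2) / ((k:ℝ) + 1) by positivity)
      have e : ((k:ℝ) + 2) / ((k:ℝ) + 1) - 1 = 1 / ((k:ℝ) + 1) := by field_simp; ring
      linarith
    have h1 : (((k:ℝ) + 2) ^ c')⁻¹ = (((k:ℝ) + 1) ^ c')⁻¹ * Real.exp (- (c' * Real.log (((k:ℝ) + 2) / ((k:ℝ) + 1)))) := by
      rw [Real.exp_neg, ← mul_inv, mul_comm c', ← Real.rpow_def_of_pos (by positivity), ← Real.mul_rpow (by positivity) (by positivity)]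
      congr 2; field_simp
    have h2 := Real.add_one_le_exp (- (c' * Real.log (((k:ℝ) + 2) / ((k:ℝ) + 1))))
    have h3 : c' * Real.log (((k:ℝ) + 2) / ((k:ℝ) + 1)) ≤ c' * (1 / ((k:ℝ) + 1)) := by gcongr; linarith
    rw [h1, Real.rpow_add_one hk.ne', mul_inv]
    have : 0 < (((k:ℝ) + 1) ^ c')⁻¹ := by positivity
    have h4 : 1 - c' * (1 / ((k:ℝ) + 1)) ≤ Real.exp (- (c' * Real.log (((k:ℝ) + 2) / ((k:ℝ) + 1)))) := by linarith
    have := mul_le_mul_of_nonneg_left h4 this.le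
    rw [one_div] at this
    nlinarith
  have hs : Summable fun k : ℕ => C * c' * (((k:ℝ) + 1) ^ (1 + (c' - c)))⁻¹ := by
    apply Summable.mul_left
    have := (summable_nat_add_iff (f := fun k : ℕ => ((k:ℝ) ^ (1 + (c' - c)))⁻¹) 1).2
      (Real.summable_nat_rpow_inv.2 (by linarith))
    simpa using this
  have hid : ∀ n, ∑ k ∈ range n, g k / ((k:ℝ) + 1) ^ c' ≤ (∑ k ∈ range n, g k) * (((n:ℝ) + 1) ^ c')⁻¹
      + ∑ k ∈ range n, C * c' * (((k:ℝ) + 1) ^ (1 + (c' - c)))⁻¹ := by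
    intro n
    induction n with
    | zero => simp
    | succ n ih =>
      have hk : (0:ℝ) < (n:ℝ) + 1 := by positivity
      have h1 := hC n
      have hG : 0 ≤ ∑ k ∈ range (n + 1), g k := sum_nonneg fun i _ => hg i
      have h2 : (∑ k ∈ range (n + 1), g k) * ((((n:ℝ) + 1) ^ c')⁻¹ - (((n:ℝ) + 2) ^ c')⁻¹) ≤
          C * c' * (((n:ℝ) + 1) ^ (1 + (c' - c)))⁻¹ := by
        calc _ ≤ (∑ k ∈ range (n + 1), g k) * (c' * (((n:ℝ) + 1) ^ (c' + 1))⁻¹) := by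
              gcongr; exact hdiff n
          _ ≤ (C * ((n:ℝ) + 1) ^ c) * (c' * (((n:ℝ) + 1) ^ (c' + 1))⁻¹) := by
              have : 0 < c' := by linarith
              gcongr
          _ = _ := by
              rw [← Real.rpow_neg hk.le, ← Real.rpow_neg hk.le, show -(1 + (c' - c)) = c + (-(c' + 1)) by ring, Real.rpow_add hk]; ring
      rw [sum_range_succ, sum_range_succ (fun k : ℕ => C * c' * (((k:ℝ) + 1) ^ (1 + (c' - c)))⁻¹)]
      push_cast
      rw [show (n:ℝ) + 1 + 1 = n + 2 by ring]
      rw [sum_range_succ] at h2 ⊢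
      rw [div_eq_mul_inv]
      nlinarith
  refine summable_of_sum_range_le (c := C + ∑' k : ℕ, C * c' * (((k:ℝ) + 1) ^ (1 + (c' - c)))⁻¹)
    (fun n => div_nonneg (hg n) (by positivity)) fun n => ?_
  refine (hid n).trans ?_
  gcongr
  · rcases n with _ | n
    · simpa using hC0
    · have hk : (0:ℝ) < (n:ℝ) + 1 := by positivity
      rw [← div_eq_mul_inv, div_le_iff₀ (by positivity)]
      refine (hC n).trans ?_
      gcongr
      push_cast
      calc ((n:ℝ) + 1) ^ c ≤ ((n:ℝ) + 1) ^ c' := Real.rpow_le_rpow_of_exponent_le (by linarith) hcc.le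
        _ ≤ _ := by
          have : 0 < c' := by linarith
          gcongr; linarith
  · refine hs.sum_le_tsum _ fun i _ => ?_
    have : 0 < c' := by linarith
    positivity


lemma integral_mul_condExp_zero {Ω : Type*} {m0 : MeasurableSpace Ω} {μ : Measure Ω} [IsProbabilityMeasure μ]
    {m : MeasurableSpace Ω} (hm : m ≤ m0) {f g : Ω → ℝ} (hf : StronglyMeasurable[m] f)
    (hfg : Integrable (f * g) μ) (hg : Integrable g μ) (h0 : μ[g|m] =ᵐ[μ] 0) : ∫ ω, f ω * g ω ∂μ = 0 := by
  have h1 := condExp_mul_of_stronglyMeasurable_left hf hfg hg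
  have h2 : ∫ ω, (μ[f * g|m]) ω ∂μ = ∫ ω, (f * g) ω ∂μ := integral_condExp hm
  have h3 : μ[f * g|m] =ᵐ[μ] 0 := by
    filter_upwards [h1, h0] with ω h1 h0
    rw [h1, Pi.mul_apply, h0]; simp
  rw [integral_congr_ae h3] at h2
  simp only [Pi.zero_apply, integral_zero, Pi.mul_apply] at h2
  exact h2.symm

lemma abs_le_one_add_rpow {r : ℝ} (hr : 1 ≤ r) {x : ℝ} (hx : 0 ≤ x) : x ≤ 1 + x ^ r := by
  rcases le_total x 1 with h | h
  · have : 0 ≤ x ^ r := by positivity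
    linarith
  · have := Real.rpow_le_rpow_of_exponent_le h hr
    rw [Real.rpow_one] at this
    linarith

lemma psi_bound {r : ℝ} (hr : 1 < r) (x y : ℝ) :
    |(|x| ^ (r - 1) * (SignType.sign x : ℝ)) * y| ≤ |x| ^ r + |y| ^ r := by
  have hs : |(SignType.sign x : ℝ)| ≤ 1 := by
    rcases lt_trichotomy x 0 with h | h | h
    · rw [sign_neg h]; simp
    · rw [h]; simp
    · rw [sign_pos h]; simp
  have hpow : ∀ z : ℝ, |z| ^ r = |z| ^ (r - 1) * |z| := by
    intro z
    rcases (abs_nonneg z).eq_or_lt with h | h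
    · rw [← h, Real.zero_rpow (by linarith)]; simp
    · rw [← Real.rpow_add_one h.ne']; congr 1; ring
  have h1 : |(|x| ^ (r - 1) * (SignType.sign x : ℝ)) * y| ≤ |x| ^ (r - 1) * |y| := by
    rw [abs_mul, abs_mul, abs_of_nonneg (show 0 ≤ |x| ^ (r - 1) by positivity)]
    gcongr
    exact mul_le_of_le_one_right (by positivity) hs
  refine h1.trans ?_
  rcases le_total |x| |y| with h | h
  · calc |x| ^ (r - 1) * |y| ≤ |y| ^ (r - 1) * |y| := by
          gcongr
      _ = |y| ^ r := (hpow y).symm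
      _ ≤ _ := by have : 0 ≤ |x| ^ r := by positivity
                  linarith
  · calc |x| ^ (r - 1) * |y| ≤ |x| ^ (r - 1) * |x| := by gcongr
      _ = |x| ^ r := (hpow x).symm
      _ ≤ _ := by have : 0 ≤ |y| ^ r := by positivity
                  linarith

lemma mart_conv0 {Ω : Type*} {m0 : MeasurableSpace Ω} {μ : Measure Ω} [IsProbabilityMeasure μ]
    (F : Filtration ℕ m0) {r : ℝ} (hr1 : 1 < r) (hr2 : r ≤ 2) (D : ℕ → Ω → ℝ)
    (hD : ∀ n, StronglyMeasurable[F (n + 1)] (D n))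
    (hDr : ∀ n, Integrable (fun ω => |D n ω| ^ r) μ)
    (hD0 : ∀ n, μ[D n|F n] =ᵐ[μ] 0) (B : ℝ)
    (hB : ∀ n, ∑ k ∈ range n, ∫ ω, |D k ω| ^ r ∂μ ≤ B) :
    ∀ᵐ ω ∂μ, ∃ T, Tendsto (fun n => ∑ k ∈ range n, D k ω) atTop (𝓝 T) := by
  have hDm : ∀ n, StronglyMeasurable (D n) := fun n => (hD n).mono (F.le _)
  have hDi : ∀ n, Integrable (D n) μ := fun n => by
    refine Integrable.mono' ((integrable_const 1).add (hDr n)) (hDm n).aestronglyMeasurable ?_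
    refine Eventually.of_forall fun ω => ?_
    exact abs_le_one_add_rpow hr1.le (abs_nonneg _)
  set M : ℕ → Ω → ℝ := fun n ω => ∑ k ∈ range n, D k ω with hM
  have hMs : ∀ n, M (n + 1) = M n + D n := fun n => by ext ω; simp [hM, sum_range_succ]
  have hMa : ∀ n, StronglyMeasurable[F n] (M n) := by
    intro n
    have : M n = ∑ k ∈ range n, D k := by ext ω; simp [hM]
    rw [this]
    exact Finset.stronglyMeasurable_sum _ fun k hk => (hD k).mono (F.mono (by simpa using hk))
  have hMm : ∀ n, StronglyMeasurable (M n) := fun n => (hMa n).mono (F.le _)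
  have hMi : ∀ n, Integrable (M n) μ := fun n => integrable_finsetSum _ fun k _ => hDi k
  have hψ : ∀ n, StronglyMeasurable[F n] fun ω => (|M n ω| ^ (r - 1) * (SignType.sign (M n ω) : ℝ)) := by
    intro n
    have : Measurable fun x : ℝ => (|x| ^ (r - 1) * (SignType.sign x : ℝ)) := by
      refine Measurable.mul (by fun_prop) ?_
      have : (fun x : ℝ => (SignType.sign x : ℝ)) = fun x => if 0 < x then 1 else if x < 0 then -1 else 0 := by
        ext x
        rw [sign_apply]
        split_ifs <;> simp
      rw [this]
      exact Measurable.ite measurableSet_Ioi measurable_const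
        (Measurable.ite measurableSet_Iio measurable_const measurable_const)
    exact (this.comp (hMa n).measurable).stronglyMeasurable
  have hrm : ∀ {f : Ω → ℝ}, StronglyMeasurable f → AEStronglyMeasurable (fun ω => |f ω| ^ r) μ := by
    intro f hf
    have := hf.measurable
    exact (by fun_prop : Measurable fun ω => |f ω| ^ r).aestronglyMeasurable
  have hpsi_i : ∀ n, Integrable (fun ω => |M n ω| ^ r) μ →
      Integrable (fun ω => (|M n ω| ^ (r - 1) * (SignType.sign (M n ω) : ℝ)) * D n ω) μ := by
    intro n hn
    refine Integrable.mono' (hn.add (hDr n)) ?_ (Eventually.of_forall fun ω => psi_bound hr1 _ _)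
    exact (((hψ n).mono (F.le n)).mul (hDm n)).aestronglyMeasurable
  have hMr : ∀ n, Integrable (fun ω => |M n ω| ^ r) μ := by
    intro n
    induction n with
    | zero => simp [hM, Real.zero_rpow (by linarith : r ≠ 0)]
    | succ n ih =>
      refine Integrable.mono' ((ih.add ((hpsi_i n ih).const_mul r)).add ((hDr n).const_mul 6)) (hrm (hMm _)) ?_
      refine Eventually.of_forall fun ω => ?_
      have := vbe hr1.le hr2 (M n ω) (D n ω)
      rw [Real.norm_of_nonneg (by positivity), hMs]
      simp only [Pi.add_apply]
      linarith
  have hbound : ∀ n, ∫ ω, |M n ω| ^ r ∂μ ≤ 6 * ∑ k ∈ range n, ∫ ω, |D k ω| ^ r ∂μ := by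
    intro n
    induction n with
    | zero => simp [hM, Real.zero_rpow (by linarith : r ≠ 0)]
    | succ n ih =>
      have h0 := integral_mul_condExp_zero (F.le n) (hψ n) (hpsi_i n (hMr n)) (hDi n) (hD0 n)
      have i1 : Integrable (fun ω => |M n ω| ^ r + r * ((|M n ω| ^ (r - 1) * (SignType.sign (M n ω) : ℝ)) * D n ω)) μ := (hMr n).add ((hpsi_i n (hMr n)).const_mul r)
      have i2 := i1.add ((hDr n).const_mul 6)
      have : ∫ ω, |M (n + 1) ω| ^ r ∂μ ≤ ∫ ω, ((|M n ω| ^ r + r * ((|M n ω| ^ (r - 1) * (SignType.sign (M n ω) : ℝ)) * D n ω)) + 6 * |D n ω| ^ r) ∂μ := by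
        refine integral_mono (hMr _) i2 fun ω => ?_
        have := vbe hr1.le hr2 (M n ω) (D n ω)
        simp only [hMs, Pi.add_apply]
        linarith
      rw [integral_add i1 ((hDr n).const_mul 6), integral_add (hMr n) ((hpsi_i n (hMr n)).const_mul r),
        integral_const_mul, integral_const_mul, h0] at this
      rw [sum_range_succ]
      linarith
  have hmart : Martingale M F μ := by
    refine martingale_nat hMa hMi fun n => ?_
    rw [hMs]
    have h1 := condExp_add (hMi n) (hDi n) (F n)
    have h2 : μ[M n|F n] = M n := condExp_of_stronglyMeasurable (F.le n) (hMa n) (hMi n)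
    filter_upwards [h1, hD0 n] with ω h1 h3
    rw [h1, Pi.add_apply, h3, h2]; simp
  refine hmart.submartingale.exists_ae_tendsto_of_bdd (R := (1 + 6 * B).toNNReal) fun n => ?_
  rw [eLpNorm_one_eq_lintegral_enorm, ← ofReal_integral_norm_eq_lintegral_enorm (hMi n)]
  refine ENNReal.ofReal_le_ofReal ?_
  have : ∫ ω, ‖M n ω‖ ∂μ ≤ ∫ ω, (1 + |M n ω| ^ r) ∂μ := by
    refine integral_mono (hMi n).norm ((integrable_const 1).add (hMr n)) fun ω => ?_
    exact abs_le_one_add_rpow hr1.le (abs_nonneg _)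
  rw [integral_add (integrable_const 1) (hMr n)] at this
  simp only [integral_const, probReal_univ, smul_eq_mul, mul_one] at this
  have := hbound n
  have := hB n
  linarith

lemma mart_conv {Ω : Type*} {m0 : MeasurableSpace Ω} {μ : Measure Ω} [IsProbabilityMeasure μ]
    (F : Filtration ℕ m0) {r : ℝ} (hr1 : 1 < r) (hr2 : r ≤ 2) (ξ U : ℕ → Ω → ℝ)
    (hξ : ∀ n, StronglyMeasurable[F (n + 1)] (ξ n))
    (hξr : ∀ n, Integrable (fun ω => |ξ n ω| ^ r) μ)
    (hξ0 : ∀ n, μ[ξ n|F n] =ᵐ[μ] 0)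
    (hK : ∀ᵐ ω ∂μ, ∃ K : ℝ, ∀ n, (μ[fun ω => |ξ n ω| ^ r|F n]) ω ≤ K)
    (hU : ∀ n, StronglyMeasurable[F n] (U n))
    (hs : ∀ᵐ ω ∂μ, Summable fun n => |U n ω| ^ r) :
    ∀ᵐ ω ∂μ, ∃ T, Tendsto (fun n => ∑ k ∈ range n, U k ω * ξ k ω) atTop (𝓝 T) := by
  set κ : ℕ → Ω → ℝ := fun n => μ[fun ω => |ξ n ω| ^ r|F n] with hκ
  have hκm : ∀ n, StronglyMeasurable[F n] (κ n) := fun n => stronglyMeasurable_condExp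
  set A : ℕ → Ω → ℝ := fun n ω => ∑ k ∈ range (n + 1), |U k ω| ^ r with hA
  have hUr : ∀ k, Measurable[F k] fun ω => |U k ω| ^ r := by
    intro k
    have := (hU k).measurable
    have h2 : Measurable fun x : ℝ => |x| ^ r := by fun_prop
    exact h2.comp this
  have hAm : ∀ n, Measurable[F n] (A n) := by
    intro n
    refine Finset.measurable_fun_sum _ fun k hk => (hUr k).mono (F.mono ?_) le_rfl
    have := mem_range.1 hk; omega
  set E : ℕ → ℕ → Set Ω := fun N n => {ω | A n ω ≤ N} ∩ {ω | κ n ω ≤ N} with hE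
  have hEm : ∀ N n, MeasurableSet[F n] (E N n) := fun N n =>
    (measurableSet_le (hAm n) measurable_const).inter
      (measurableSet_le (hκm n).measurable measurable_const)
  have hN : ∀ N : ℕ, ∀ᵐ ω ∂μ, ∃ T, Tendsto (fun n => ∑ k ∈ range n, (E N k).indicator (U k) ω * ξ k ω) atTop (𝓝 T) := by
    intro N
    set V : ℕ → Ω → ℝ := fun k => (E N k).indicator (U k) with hV
    have hVm : ∀ k, StronglyMeasurable[F k] (V k) := fun k => (hU k).indicator (hEm N k)
    have hVle : ∀ k ω, |V k ω| ^ r ≤ N := by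
      intro k ω
      by_cases h : ω ∈ E N k
      · simp only [hV, Set.indicator_of_mem h]
        have h1 : A k ω ≤ N := h.1
        refine le_trans ?_ h1
        exact single_le_sum (f := fun k => |U k ω| ^ r) (fun i _ => by positivity) (mem_range.2 (Nat.lt_succ_self k))
      · simp [hV, Set.indicator_of_notMem h, Real.zero_rpow (by linarith : r ≠ 0)]
    have hVsum : ∀ n ω, ∑ k ∈ range n, |V k ω| ^ r ≤ N := by
      intro n ω
      have hnn : ∀ k, 0 ≤ |V k ω| ^ r := fun k => by positivity
      have hmono : ∀ k, |V k ω| ^ r ≤ |U k ω| ^ r := by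
        intro k
        by_cases h : ω ∈ E N k
        · simp only [hV, Set.indicator_of_mem h]; exact le_rfl
        · simp only [hV, Set.indicator_of_notMem h, abs_zero, Real.zero_rpow (by linarith : r ≠ 0)]
          positivity
      induction n with
      | zero => simp
      | succ n ih =>
        by_cases h : ω ∈ E N n
        · have h1 : A n ω ≤ N := h.1
          exact (sum_le_sum fun k _ => hmono k).trans h1
        · rw [sum_range_succ]
          simpa [hV, Set.indicator_of_notMem h, Real.zero_rpow (by linarith : r ≠ 0)] using ih
    have hVb : ∀ k ω, |V k ω| ≤ 1 + N := fun k ω =>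
      (abs_le_one_add_rpow hr1.le (abs_nonneg _)).trans (by linarith [hVle k ω])
    have hξm : ∀ n, StronglyMeasurable (ξ n) := fun n => (hξ n).mono (F.le _)
    have hξi : ∀ n, Integrable (ξ n) μ := fun n => by
      refine Integrable.mono' ((integrable_const 1).add (hξr n)) (hξm n).aestronglyMeasurable ?_
      refine Eventually.of_forall fun ω => ?_
      exact abs_le_one_add_rpow hr1.le (abs_nonneg _)
    have hVrm : ∀ k, StronglyMeasurable[F k] fun ω => |V k ω| ^ r := fun k =>
      ((by fun_prop : Measurable fun x : ℝ => |x| ^ r).comp (hVm k).measurable).stronglyMeasurable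
    have hprod : ∀ k, Integrable (fun ω => |V k ω| ^ r * |ξ k ω| ^ r) μ := by
      intro k
      refine (hξr k).bdd_mul (c := N) ((hVrm k).mono (F.le k)).aestronglyMeasurable ?_
      refine Eventually.of_forall fun ω => ?_
      rw [Real.norm_of_nonneg (by positivity)]; exact hVle k ω
    have hcond : ∀ k, ∫ ω, |V k ω| ^ r * |ξ k ω| ^ r ∂μ ≤ N * ∫ ω, |V k ω| ^ r ∂μ := by
      intro k
      have h1 := condExp_mul_of_stronglyMeasurable_left (hVrm k) (hprod k) (hξr k)
      have h2 : ∫ ω, (μ[(fun ω => |V k ω| ^ r) * fun ω => |ξ k ω| ^ r|F k]) ω ∂μ = ∫ ω, |V k ω| ^ r * |ξ k ω| ^ r ∂μ := integral_condExp (F.le k)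
      rw [← h2, ← integral_const_mul]
      refine integral_mono_ae integrable_condExp ?_ ?_
      · refine Integrable.const_mul ?_ _
        refine Integrable.mono' (integrable_const (N:ℝ)) ((hVrm k).mono (F.le k)).aestronglyMeasurable ?_
        refine Eventually.of_forall fun ω => ?_
        rw [Real.norm_of_nonneg (by positivity)]; exact hVle k ω
      · filter_upwards [h1] with ω h1
        rw [h1, Pi.mul_apply]
        by_cases h : ω ∈ E N k
        · have h3 : κ k ω ≤ N := h.2
          simp only [hκ] at h3
          rw [mul_comm]
          gcongr
        · simp [hV, Set.indicator_of_notMem h, Real.zero_rpow (by linarith : r ≠ 0)]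
    refine mart_conv0 F hr1 hr2 (fun k ω => V k ω * ξ k ω)
      (fun n => ((hVm n).mono (F.mono (Nat.le_succ n))).mul (hξ n)) ?_ ?_ (N * N) ?_
    · intro n
      simp_rw [abs_mul, Real.mul_rpow (abs_nonneg _) (abs_nonneg _)]
      exact hprod n
    · intro n
      have hi : Integrable (V n * ξ n) μ := by
        refine (hξi n).bdd_mul (c := 1 + N) ((hVm n).mono (F.le n)).aestronglyMeasurable ?_
        exact Eventually.of_forall fun ω => hVb n ω
      have h1 := condExp_mul_of_stronglyMeasurable_left (hVm n) hi (hξi n)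
      filter_upwards [h1, hξ0 n] with ω h1 h2
      change (μ[V n * ξ n|F n]) ω = _
      rw [h1, Pi.mul_apply, h2]; simp
    · intro n
      simp_rw [abs_mul, Real.mul_rpow (abs_nonneg _) (abs_nonneg _)]
      calc _ ≤ ∑ k ∈ range n, N * ∫ ω, |V k ω| ^ r ∂μ := sum_le_sum fun k _ => hcond k
        _ = N * ∫ ω, ∑ k ∈ range n, |V k ω| ^ r ∂μ := by
            rw [← mul_sum, integral_finsetSum]
            intro k _
            refine Integrable.mono' (integrable_const (N:ℝ)) ((hVrm k).mono (F.le k)).aestronglyMeasurable ?_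
            refine Eventually.of_forall fun ω => ?_
            rw [Real.norm_of_nonneg (by positivity)]; exact hVle k ω
        _ ≤ N * ∫ ω, (N:ℝ) ∂μ := by
            refine mul_le_mul_of_nonneg_left ?_ (by positivity)
            refine integral_mono_of_nonneg (Eventually.of_forall fun ω => sum_nonneg fun i _ => by positivity) (integrable_const _)
              (Eventually.of_forall fun ω => hVsum n ω)
        _ = _ := by simp
  filter_upwards [ae_all_iff.2 hN, hK, hs] with ω hN hK hs
  obtain ⟨K, hK⟩ := hK
  obtain ⟨N, hN1⟩ := exists_nat_ge (max K (∑' n, |U n ω| ^ r))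
  have hmem : ∀ k, ω ∈ E N k := by
    intro k
    refine ⟨?_, (hK k).trans ((le_max_left _ _).trans hN1)⟩
    exact (hs.sum_le_tsum _ fun i _ => by positivity).trans ((le_max_right _ _).trans hN1)
  obtain ⟨T, hT⟩ := hN N
  refine ⟨T, ?_⟩
  simpa only [Set.indicator_of_mem (hmem _)] using hT


lemma ae_summable_of_bound {Ω : Type*} {m0 : MeasurableSpace Ω} {μ : Measure Ω} (h : ℕ → Ω → ℝ)
    (h0 : ∀ n ω, 0 ≤ h n ω) (hi : ∀ n, Integrable (h n) μ) (B : ℝ)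
    (hB : ∀ n, ∑ k ∈ range n, ∫ ω, h k ω ∂μ ≤ B) : ∀ᵐ ω ∂μ, Summable fun n => h n ω := by
  have hsum : Summable fun k => ∫ ω, h k ω ∂μ :=
    summable_of_sum_range_le (fun n => integral_nonneg (h0 n)) hB
  have h1 : ∫⁻ ω, ∑' n, ENNReal.ofReal (h n ω) ∂μ = ∑' n, ∫⁻ ω, ENNReal.ofReal (h n ω) ∂μ :=
    lintegral_tsum fun n => (hi n).aemeasurable.ennreal_ofReal
  have h2 : ∑' n, ∫⁻ ω, ENNReal.ofReal (h n ω) ∂μ ≠ ⊤ := by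
    have : ∀ n, ∫⁻ ω, ENNReal.ofReal (h n ω) ∂μ = ENNReal.ofReal (∫ ω, h n ω ∂μ) := fun n =>
      (ofReal_integral_eq_lintegral_ofReal (hi n) (Eventually.of_forall (h0 n))).symm
    simp_rw [this]
    rw [← ENNReal.ofReal_tsum_of_nonneg (fun n => integral_nonneg (h0 n)) hsum]
    exact ENNReal.ofReal_ne_top
  rw [← h1] at h2
  have h3 := ae_lt_top' (AEMeasurable.ennreal_tsum fun n => (hi n).aemeasurable.ennreal_ofReal) h2
  filter_upwards [h3] with ω hω
  have := ENNReal.summable_toReal hω.ne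
  simpa only [ENNReal.toReal_ofReal (h0 _ ω)] using this

lemma lyap_step (Q : ℕ) : ∃ C : ℝ, 0 ≤ C ∧ ∀ W g u e : ℝ, 0 ≤ W → 0 ≤ g → g ≤ 1 →
    u ^ 2 ≤ g * ((1 - g) * W) →
    ((1 - g) * W + 2 * u * e + g * e ^ 2) ^ (Q + 1) ≤ (1 - g / 2) * W ^ (Q + 1) +
      2 * (Q + 1) * (((1 - g) * W) ^ Q * u * e) + C * (g * e ^ (2 * (Q + 1))) := by
  obtain ⟨C, hC0, hC⟩ := lyap_aux Q (1 / 2) (by norm_num)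
  refine ⟨C, hC0, fun W g u e hW hg0 hg1 hu => ?_⟩
  have hw : 0 ≤ (1 - g) * W := mul_nonneg (by linarith) hW
  have h1 := hC _ g u e hw hg0 hg1 hu
  have h2 : ((1 - g) * W) ^ (Q + 1) ≤ (1 - g) * W ^ (Q + 1) := by
    rw [mul_pow]
    gcongr
    exact pow_le_of_le_one (by linarith) (by linarith) (by omega)
  have h3 : 0 ≤ W ^ (Q + 1) := by positivity
  have h4 : (1 + g / 2) * ((1 - g) * W) ^ (Q + 1) ≤ (1 + g / 2) * ((1 - g) * W ^ (Q + 1)) := by gcongr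
  have h5 : 0 ≤ g ^ 2 * W ^ (Q + 1) := by positivity
  rw [pow_mul]
  nlinarith

lemma lyap_nonneg {w g u e : ℝ} (hw : 0 ≤ w) (hg0 : 0 ≤ g) (hu : u ^ 2 ≤ g * w) :
    0 ≤ w + 2 * u * e + g * e ^ 2 := by
  rcases hg0.eq_or_lt with h | h
  · subst h
    have : u = 0 := by nlinarith [sq_nonneg u]
    subst this; simpa using hw
  · have : 0 ≤ g * (w + 2 * u * e + g * e ^ 2) := by nlinarith [sq_nonneg (u + g * e)]
    exact nonneg_of_mul_nonneg_right this h

lemma lyap_cross (Q : ℕ) {W g u e : ℝ} (hW : 0 ≤ W) (hg0 : 0 ≤ g) (hg1 : g ≤ 1)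
    (hu : u ^ 2 ≤ g * ((1 - g) * W)) :
    |((1 - g) * W) ^ Q * u * e| ≤ W ^ (Q + 1) + e ^ (2 * (Q + 1)) := by
  have hw : 0 ≤ (1 - g) * W := mul_nonneg (by linarith) hW
  have hwW : (1 - g) * W ≤ W := by nlinarith
  have huw : u ^ 2 ≤ W := by nlinarith
  have hue : |u * e| ≤ max W (e ^ 2) := by
    have h1 := le_max_left W (e ^ 2)
    have h2 := le_max_right W (e ^ 2)
    rw [abs_mul]; nlinarith [sq_nonneg (|u| - |e|), sq_abs u, sq_abs e]
  rw [mul_assoc, abs_mul, abs_of_nonneg (by positivity), pow_mul]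
  calc ((1 - g) * W) ^ Q * |u * e| ≤ (max W (e ^ 2)) ^ Q * max W (e ^ 2) := by
        gcongr; exact hwW.trans (le_max_left _ _)
    _ = (max W (e ^ 2)) ^ (Q + 1) := (pow_succ _ _).symm
    _ ≤ _ := by
      rcases max_choice W (e ^ 2) with h | h <;> rw [h]
      · have : 0 ≤ (e ^ 2) ^ (Q + 1) := by positivity
        linarith
      · have : 0 ≤ W ^ (Q + 1) := by positivity
        linarith

lemma lyap_summable {Ω : Type*} {m0 : MeasurableSpace Ω} {μ : Measure Ω} [IsProbabilityMeasure μ]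
    (F : Filtration ℕ m0) (Q : ℕ) (e g W u : ℕ → Ω → ℝ) (b : ℕ → ℝ) (σ2q : ℝ)
    (he : ∀ n, StronglyMeasurable[F (n + 1)] (e n))
    (hei : ∀ n, Integrable (e n) μ)
    (heq : ∀ n, Integrable (fun ω => e n ω ^ (2 * (Q + 1))) μ)
    (he0 : ∀ n, μ[e n|F n] =ᵐ[μ] 0)
    (heq0 : ∀ n, μ[fun ω => e n ω ^ (2 * (Q + 1))|F n] =ᵐ[μ] fun _ => σ2q)
    (hg : ∀ n, StronglyMeasurable[F n] (g n)) (hW : ∀ n, StronglyMeasurable[F n] (W n))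
    (hu : ∀ n, StronglyMeasurable[F n] (u n))
    (hg0 : ∀ n ω, 0 ≤ g n ω) (hg1 : ∀ n ω, g n ω ≤ 1) (hW0 : ∀ n ω, 0 ≤ W n ω)
    (huu : ∀ n ω, u n ω ^ 2 ≤ g n ω * ((1 - g n ω) * W n ω))
    (hrec : ∀ n ω, W (n + 1) ω = (1 - g n ω) * W n ω + 2 * u n ω * e n ω + g n ω * e n ω ^ 2)
    (hWi : Integrable (fun ω => W 0 ω ^ (Q + 1)) μ)
    (hb0 : ∀ n, 0 ≤ b n) (hb1 : ∀ n, b n ≤ 1) (hb : ∀ n, b (n + 1) ≤ b n)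
    (hs : ∀ᵐ ω ∂μ, Summable fun n => g n ω * b n) :
    ∀ᵐ ω ∂μ, Summable fun n => g n ω * W n ω ^ (Q + 1) * b n := by
  obtain ⟨C, hC0, hC⟩ := lyap_step Q
  have hem : ∀ n, StronglyMeasurable (e n) := fun n => (he n).mono (F.le _)
  have hgm : ∀ n, StronglyMeasurable (g n) := fun n => (hg n).mono (F.le _)
  have hWm : ∀ n, StronglyMeasurable (W n) := fun n => (hW n).mono (F.le _)
  have hum : ∀ n, StronglyMeasurable (u n) := fun n => (hu n).mono (F.le _)
  have hWq : ∀ n, Integrable (fun ω => W n ω ^ (Q + 1)) μ := by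
    intro n
    induction n with
    | zero => exact hWi
    | succ n ih =>
      refine Integrable.mono' ((ih.add (heq n)).const_mul (2 ^ (Q + 1) * 2 ^ Q)) ((hWm _).pow _).aestronglyMeasurable ?_
      refine Eventually.of_forall fun ω => ?_
      have h1 : W (n + 1) ω ≤ 2 * (W n ω + e n ω ^ 2) := by
        rw [hrec]
        have a1 := huu n ω
        have a2 := hg0 n ω
        have a3 := hg1 n ω
        have a4 := hW0 n ω
        have : u n ω ^ 2 ≤ W n ω := by nlinarith [mul_nonneg a2 a4, mul_nonneg (mul_nonneg a2 a4) a2, mul_nonneg a4 (sub_nonneg.2 a3)]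
        nlinarith [sq_nonneg (u n ω - e n ω), sq_nonneg (e n ω)]
      rw [Real.norm_of_nonneg (pow_nonneg (hW0 _ _) _)]
      calc W (n + 1) ω ^ (Q + 1) ≤ (2 * (W n ω + e n ω ^ 2)) ^ (Q + 1) := by
            gcongr; exact hW0 _ _
        _ = 2 ^ (Q + 1) * (W n ω + e n ω ^ 2) ^ (Q + 1) := mul_pow _ _ _
        _ ≤ 2 ^ (Q + 1) * (2 ^ Q * (W n ω ^ (Q + 1) + (e n ω ^ 2) ^ (Q + 1))) := by
            gcongr
            exact add_pow_le (hW0 _ _) (by positivity) _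
        _ = _ := by simp only [Pi.add_apply]; rw [pow_mul]; ring
  set A : ℕ → Ω → ℝ := fun n ω => ∑ k ∈ range (n + 1), g k ω * b k with hA
  have hAm : ∀ n, Measurable[F n] (A n) := by
    intro n
    refine Finset.measurable_fun_sum _ fun k hk => ?_
    have := mem_range.1 hk
    exact ((hg k).mono (F.mono (by omega))).measurable.mul_const _
  have hgb : ∀ n ω, 0 ≤ g n ω * b n := fun n ω => mul_nonneg (hg0 _ _) (hb0 _)
  have hN : ∀ N : ℕ, ∀ᵐ ω ∂μ, Summable fun n => ({ω | A n ω ≤ N}.indicator (fun _ => b n) ω) * (g n ω * W n ω ^ (Q + 1)) := by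
    intro N
    set V : ℕ → Ω → ℝ := fun n => {ω | A n ω ≤ N}.indicator (fun _ => b n) with hV
    have hVF : ∀ n, StronglyMeasurable[F n] (V n) := fun n =>
      stronglyMeasurable_const.indicator (measurableSet_le (hAm n) measurable_const)
    have hVm : ∀ n, StronglyMeasurable (V n) := fun n => (hVF n).mono (F.le _)
    have hV0 : ∀ n ω, 0 ≤ V n ω := fun n ω => Set.indicator_nonneg (fun _ _ => hb0 n) _
    have hV1 : ∀ n ω, V n ω ≤ 1 := fun n ω =>
      Set.indicator_le' (f := fun _ => b n) (g := fun _ => (1:ℝ)) (fun _ _ => hb1 n) (fun _ _ => zero_le_one) ω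
    have hVanti : ∀ n ω, V (n + 1) ω ≤ V n ω := by
      intro n ω
      by_cases h : A (n + 1) ω ≤ N
      · have h' : A n ω ≤ N := by
          refine le_trans ?_ h
          simp only [hA]
          rw [sum_range_succ _ (n + 1)]
          linarith [hgb (n + 1) ω]
        simp only [hV]
        rw [Set.indicator_of_mem (by exact h), Set.indicator_of_mem (by exact h')]
        exact hb n
      · simp only [hV]
        rw [Set.indicator_of_notMem (by exact h)]
        exact hV0 n ω
    have hVsum : ∀ n ω, ∑ k ∈ range n, V k ω * g k ω ≤ N := by
      intro n ω
      induction n with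
      | zero => simp
      | succ n ih =>
        by_cases h : A n ω ≤ N
        · refine le_trans ?_ h
          refine sum_le_sum fun k _ => ?_
          rw [mul_comm]
          refine mul_le_mul_of_nonneg_left ?_ (hg0 _ _)
          exact Set.indicator_le_self' (f := fun _ => b k) (fun _ _ => hb0 k) ω
        · rw [sum_range_succ]
          simp only [hV] at ih ⊢
          rw [Set.indicator_of_notMem (s := {ω | A n ω ≤ N}) (by exact h)]
          simpa using ih
    have bdd : ∀ (X : Ω → ℝ) (Y : Ω → ℝ), StronglyMeasurable X → (∀ ω, 0 ≤ X ω) → (∀ ω, X ω ≤ 1) →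
        Integrable Y μ → Integrable (fun ω => X ω * Y ω) μ := by
      intro X Y hX h0 h1 hY
      refine hY.bdd_mul (c := 1) hX.aestronglyMeasurable (Eventually.of_forall fun ω => ?_)
      rw [Real.norm_of_nonneg (h0 ω)]; exact h1 ω
    have hVg0 : ∀ n ω, 0 ≤ V n ω * g n ω := fun n ω => mul_nonneg (hV0 _ _) (hg0 _ _)
    have hVg1 : ∀ n ω, V n ω * g n ω ≤ 1 := fun n ω => mul_le_one₀ (hV1 _ _) (hg0 _ _) (hg1 _ _)
    have iVgW : ∀ n, Integrable (fun ω => V n ω * g n ω * W n ω ^ (Q + 1)) μ := fun n =>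
      bdd _ _ ((hVm n).mul (hgm n)) (hVg0 n) (hVg1 n) (hWq n)
    have iVW : ∀ n m, Integrable (fun ω => V n ω * W m ω ^ (Q + 1)) μ := fun n m =>
      bdd _ _ (hVm n) (hV0 n) (hV1 n) (hWq m)
    have iVg : ∀ n, Integrable (fun ω => V n ω * g n ω) μ := fun n => by
      simpa using bdd _ (fun _ => 1) ((hVm n).mul (hgm n)) (hVg0 n) (hVg1 n) (integrable_const _)
    have iVge : ∀ n, Integrable (fun ω => V n ω * g n ω * e n ω ^ (2 * (Q + 1))) μ := fun n =>
      bdd _ _ ((hVm n).mul (hgm n)) (hVg0 n) (hVg1 n) (heq n)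
    have hZm : ∀ n, StronglyMeasurable[F n] fun ω => ((1 - g n ω) * W n ω) ^ Q * u n ω := fun n =>
      (((stronglyMeasurable_const.sub (hg n)).mul (hW n)).pow Q).mul (hu n)
    have iZ : ∀ n, Integrable (fun ω => ((1 - g n ω) * W n ω) ^ Q * u n ω * e n ω) μ := by
      intro n
      refine Integrable.mono' ((hWq n).add (heq n)) (((hZm n).mono (F.le _)).mul (hem n)).aestronglyMeasurable ?_
      exact Eventually.of_forall fun ω => lyap_cross Q (hW0 _ _) (hg0 _ _) (hg1 _ _) (huu _ _)
    have iVZ : ∀ n, Integrable (fun ω => V n ω * (((1 - g n ω) * W n ω) ^ Q * u n ω * e n ω)) μ := fun n =>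
      bdd _ _ (hVm n) (hV0 n) (hV1 n) (iZ n)
    have zZ : ∀ n, ∫ ω, V n ω * (((1 - g n ω) * W n ω) ^ Q * u n ω * e n ω) ∂μ = 0 := by
      intro n
      have := integral_mul_condExp_zero (F.le n) (f := fun ω => V n ω * (((1 - g n ω) * W n ω) ^ Q * u n ω)) (g := e n)
        ((hVF n).mul (hZm n)) ?_ (hei n) (he0 n)
      · simpa only [mul_assoc] using this
      · have := iVZ n
        simpa only [Pi.mul_def, mul_assoc] using this
    have zE : ∀ n, ∫ ω, V n ω * g n ω * e n ω ^ (2 * (Q + 1)) ∂μ = σ2q * ∫ ω, V n ω * g n ω ∂μ := by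
      intro n
      have h1 := condExp_mul_of_stronglyMeasurable_left ((hVF n).mul (hg n)) (iVge n) (heq n)
      have h2 : ∫ ω, (μ[(V n * g n) * fun ω => e n ω ^ (2 * (Q + 1))|F n]) ω ∂μ = ∫ ω, V n ω * g n ω * e n ω ^ (2 * (Q + 1)) ∂μ := integral_condExp (F.le n)
      rw [← h2, ← integral_const_mul]
      refine integral_congr_ae ?_
      filter_upwards [h1, heq0 n] with ω h1 h3
      rw [h1, Pi.mul_apply, h3, Pi.mul_apply]; ring
    have step : ∀ n, ∫ ω, V (n + 1) ω * W (n + 1) ω ^ (Q + 1) ∂μ ≤ ∫ ω, V n ω * W n ω ^ (Q + 1) ∂μ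
        - 1 / 2 * ∫ ω, V n ω * g n ω * W n ω ^ (Q + 1) ∂μ + C * (σ2q * ∫ ω, V n ω * g n ω ∂μ) := by
      intro n
      have i1 : Integrable (fun ω => V n ω * W n ω ^ (Q + 1) - 1 / 2 * (V n ω * g n ω * W n ω ^ (Q + 1))) μ :=
        (iVW n n).sub ((iVgW n).const_mul _)
      have i2 : Integrable (fun ω => V n ω * W n ω ^ (Q + 1) - 1 / 2 * (V n ω * g n ω * W n ω ^ (Q + 1))
          + 2 * (Q + 1) * (V n ω * (((1 - g n ω) * W n ω) ^ Q * u n ω * e n ω))) μ :=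
        i1.add ((iVZ n).const_mul _)
      have i3 : Integrable (fun ω => V n ω * W n ω ^ (Q + 1) - 1 / 2 * (V n ω * g n ω * W n ω ^ (Q + 1))
          + 2 * (Q + 1) * (V n ω * (((1 - g n ω) * W n ω) ^ Q * u n ω * e n ω))
          + C * (V n ω * g n ω * e n ω ^ (2 * (Q + 1)))) μ :=
        i2.add ((iVge n).const_mul _)
      have := integral_mono (iVW (n + 1) (n + 1)) i3 fun ω => ?_
      · rw [integral_add i2 ((iVge n).const_mul _), integral_add i1 ((iVZ n).const_mul _),
          integral_sub (iVW n n) ((iVgW n).const_mul _), integral_const_mul, integral_const_mul,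
          integral_const_mul, zZ, zE] at this
        linarith
      · have h1 := hC (W n ω) (g n ω) (u n ω) (e n ω) (hW0 _ _) (hg0 _ _) (hg1 _ _) (huu _ _)
        rw [← hrec] at h1
        calc V (n + 1) ω * W (n + 1) ω ^ (Q + 1) ≤ V n ω * W (n + 1) ω ^ (Q + 1) :=
              mul_le_mul_of_nonneg_right (hVanti n ω) (pow_nonneg (hW0 _ _) _)
          _ ≤ V n ω * _ := mul_le_mul_of_nonneg_left h1 (hV0 _ _)
          _ = _ := by ring
    have hVgsum : ∀ n, ∑ k ∈ range n, ∫ ω, V k ω * g k ω ∂μ ≤ N := by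
      intro n
      rw [← integral_finsetSum _ fun k _ => iVg k]
      calc _ ≤ ∫ ω, (N:ℝ) ∂μ := integral_mono_of_nonneg
            (Eventually.of_forall fun ω => sum_nonneg fun i _ => hVg0 i ω) (integrable_const _)
              (Eventually.of_forall fun ω => hVsum n ω)
        _ = _ := by simp
    have tot : ∀ n, 1 / 2 * ∑ k ∈ range n, ∫ ω, V k ω * g k ω * W k ω ^ (Q + 1) ∂μ +
        ∫ ω, V n ω * W n ω ^ (Q + 1) ∂μ ≤ ∫ ω, V 0 ω * W 0 ω ^ (Q + 1) ∂μ +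
        C * (σ2q * ∑ k ∈ range n, ∫ ω, V k ω * g k ω ∂μ) := by
      intro n
      induction n with
      | zero => simp
      | succ n ih =>
        have := step n
        rw [sum_range_succ, sum_range_succ]
        linarith
    have := ae_summable_of_bound (μ := μ) (fun n ω => V n ω * g n ω * W n ω ^ (Q + 1))
      (fun n ω => mul_nonneg (hVg0 _ _) (pow_nonneg (hW0 _ _) _)) iVgW
      (2 * (∫ ω, V 0 ω * W 0 ω ^ (Q + 1) ∂μ + C * (|σ2q| * N))) fun n => ?_
    · simpa only [mul_assoc] using this
    · have h1 := tot n
      have h2 : 0 ≤ ∫ ω, V n ω * W n ω ^ (Q + 1) ∂μ :=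
        integral_nonneg fun ω => mul_nonneg (hV0 _ _) (pow_nonneg (hW0 _ _) _)
      have h3 : 0 ≤ ∑ k ∈ range n, ∫ ω, V k ω * g k ω ∂μ := sum_nonneg fun k _ => integral_nonneg (hVg0 k)
      have h4 : C * (σ2q * ∑ k ∈ range n, ∫ ω, V k ω * g k ω ∂μ) ≤ C * (|σ2q| * N) := by
        refine mul_le_mul_of_nonneg_left ?_ hC0
        exact mul_le_mul (le_abs_self _) (hVgsum n) h3 (abs_nonneg _)
      linarith
  filter_upwards [ae_all_iff.2 hN, hs] with ω hN hs
  obtain ⟨N, hN1⟩ := exists_nat_ge (∑' n, g n ω * b n)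
  have hmem : ∀ k, ω ∈ {ω | A k ω ≤ N} := fun k =>
    (hs.sum_le_tsum _ fun i _ => hgb i ω).trans hN1
  have := hN N
  simp only [Set.indicator_of_mem (hmem _)] at this
  refine this.congr fun n => ?_
  ring


lemma rpow_bound {r a x y K : ℝ} {q : ℕ} (hr0 : 0 ≤ r) (hr2 : r ≤ 2) (hra : 2 * q * r ≤ a)
    (hK : 0 ≤ K) (hy : |y| ≤ K * (1 + x ^ (2 * q))) : |y| ^ r ≤ K ^ r * 4 * (1 + |x| ^ a) := by
  have hx : x ^ (2 * q) = |x| ^ (2 * q) := by rw [pow_mul, pow_mul, sq_abs]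
  have ha : 0 ≤ |x| ^ a := by positivity
  have h1 : (1 + |x| ^ (2 * q)) ^ r ≤ 4 * (1 + |x| ^ a) := by
    rcases le_total |x| 1 with h | h
    · calc (1 + |x| ^ (2 * q)) ^ r ≤ (2:ℝ) ^ r := by
            gcongr
            have := pow_le_one₀ (abs_nonneg x) h (n := 2 * q)
            linarith
        _ ≤ 2 ^ (2:ℝ) := by gcongr; norm_num
        _ = 4 := by norm_num
        _ ≤ _ := by linarith
    · have h2 : (1 + |x| ^ (2 * q)) ≤ 2 * |x| ^ (2 * q) := by
        have := one_le_pow₀ h (n := 2 * q)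
        linarith
      calc (1 + |x| ^ (2 * q)) ^ r ≤ (2 * |x| ^ (2 * q)) ^ r := by gcongr
        _ = 2 ^ r * (|x| ^ (2 * q)) ^ r := Real.mul_rpow (by norm_num) (by positivity)
        _ = 2 ^ r * |x| ^ (2 * q * r) := by
            rw [← Real.rpow_natCast |x|, ← Real.rpow_mul (abs_nonneg _)]; push_cast; rfl
        _ ≤ 2 ^ (2:ℝ) * |x| ^ a := by
            gcongr
            · norm_num
        _ = 4 * |x| ^ a := by norm_num
        _ ≤ _ := by linarith
  calc |y| ^ r ≤ (K * (1 + |x| ^ (2 * q))) ^ r := by rw [← hx]; gcongr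
    _ = K ^ r * (1 + |x| ^ (2 * q)) ^ r := Real.mul_rpow hK (by positivity)
    _ ≤ K ^ r * (4 * (1 + |x| ^ a)) := by gcongr
    _ = _ := by ring

lemma noise_conv {Ω : Type*} {m0 : MeasurableSpace Ω} {μ : Measure Ω} [IsProbabilityMeasure μ]
    (F : Filtration ℕ m0) {r a : ℝ} (q : ℕ) (hr1 : 1 < r) (hr2 : r ≤ 2) (hra : 2 * q * r ≤ a)
    (e Y U : ℕ → Ω → ℝ) (σ2q : ℝ)
    (hea : ∀ n, Integrable (fun ω => |e n ω| ^ a) μ)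
    (heq : ∀ n, Integrable (fun ω => e n ω ^ (2 * q)) μ)
    (heq0 : ∀ n, μ[fun ω => e n ω ^ (2 * q)|F n] =ᵐ[μ] fun _ => σ2q)
    (hmom : ∀ᵐ ω ∂μ, ∃ C : ℝ, ∀ n, (μ[fun ω => |e n ω| ^ a|F n]) ω ≤ C)
    (hY : ∀ n, StronglyMeasurable[F (n + 1)] (Y n)) (hY0 : ∀ n ω, 0 ≤ Y n ω)
    (hY1 : ∀ n ω, Y n ω ≤ 1 + e n ω ^ (2 * q))
    (hU : ∀ n, StronglyMeasurable[F n] (U n))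
    (hs : ∀ᵐ ω ∂μ, Summable fun n => |U n ω| ^ r) :
    (∀ᵐ ω ∂μ, ∀ n, 0 ≤ (μ[Y n|F n]) ω ∧ (μ[Y n|F n]) ω ≤ 1 + σ2q) ∧
    ∀ᵐ ω ∂μ, ∃ T, Tendsto (fun n => ∑ k ∈ range n, U k ω * (Y k ω - (μ[Y k|F k]) ω)) atTop (𝓝 T) := by
  have hYi : ∀ n, Integrable (Y n) μ := fun n => by
    refine Integrable.mono' ((integrable_const 1).add (heq n)) ((hY n).mono (F.le _)).aestronglyMeasurable ?_
    refine Eventually.of_forall fun ω => ?_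
    rw [Real.norm_of_nonneg (hY0 _ _)]; exact hY1 n ω
  have hcb : ∀ᵐ ω ∂μ, ∀ n, 0 ≤ (μ[Y n|F n]) ω ∧ (μ[Y n|F n]) ω ≤ 1 + σ2q := by
    refine ae_all_iff.2 fun n => ?_
    have h1 : 0 ≤ᵐ[μ] μ[Y n|F n] := condExp_nonneg (Eventually.of_forall (hY0 n))
    have h2 : μ[Y n|F n] ≤ᵐ[μ] μ[(fun _ => (1:ℝ)) + fun ω => e n ω ^ (2 * q)|F n] :=
      condExp_mono (hYi n) ((integrable_const 1).add (heq n)) (Eventually.of_forall (hY1 n))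
    have h3 := condExp_add (μ := μ) (integrable_const (1:ℝ)) (heq n) (F n)
    have h4 : μ[(fun _ : Ω => (1:ℝ))|F n] = fun _ => 1 := condExp_const (F.le n) 1
    filter_upwards [h1, h2, h3, heq0 n] with ω h1 h2 h3 h5
    refine ⟨h1, h2.trans ?_⟩
    rw [h3, Pi.add_apply, h4, h5]
  refine ⟨hcb, ?_⟩
  set K : ℝ := 1 + (1 + |σ2q|) with hK
  have hK0 : 0 ≤ K := by positivity
  have hξb : ∀ᵐ ω ∂μ, ∀ n, |Y n ω - (μ[Y n|F n]) ω| ^ r ≤ K ^ r * 4 * (1 + |e n ω| ^ a) := by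
    filter_upwards [hcb] with ω h n
    refine rpow_bound (q := q) (by linarith) hr2 hra hK0 ?_
    have h0 : 0 ≤ e n ω ^ (2 * q) := by rw [pow_mul]; positivity
    have := hY0 n ω
    have := hY1 n ω
    have := h n
    have := le_abs_self σ2q
    have h7 := abs_nonneg σ2q
    rw [abs_le]
    constructor <;> nlinarith
  have hξm : ∀ n, StronglyMeasurable[F (n + 1)] fun ω => Y n ω - (μ[Y n|F n]) ω := fun n =>
    (hY n).sub (stronglyMeasurable_condExp.mono (F.mono (Nat.le_succ n)))
  have hbi : ∀ n, Integrable (fun ω => K ^ r * 4 * (1 + |e n ω| ^ a)) μ := fun n =>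
    ((integrable_const 1).add (hea n)).const_mul _
  have hξr : ∀ n, Integrable (fun ω => |Y n ω - (μ[Y n|F n]) ω| ^ r) μ := by
    intro n
    refine Integrable.mono' (hbi n) ?_ ?_
    · have := ((hξm n).mono (F.le _)).measurable
      exact ((by fun_prop : Measurable fun x : ℝ => |x| ^ r).comp this).aestronglyMeasurable
    · filter_upwards [hξb] with ω h
      rw [Real.norm_of_nonneg (by positivity)]; exact h n
  refine mart_conv F hr1 hr2 (fun n ω => Y n ω - (μ[Y n|F n]) ω) U hξm hξr ?_ ?_ hU hs
  · intro n
    have h1 := condExp_sub (hYi n) (integrable_condExp (μ := μ) (m := F n) (f := Y n)) (F n)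
    have h2 : μ[μ[Y n|F n]|F n] = μ[Y n|F n] :=
      condExp_of_stronglyMeasurable (F.le n) stronglyMeasurable_condExp integrable_condExp
    filter_upwards [h1] with ω h1
    change (μ[Y n - μ[Y n|F n]|F n]) ω = 0
    rw [h1, Pi.sub_apply, h2, sub_self]
  · have h : ∀ᵐ ω ∂μ, ∀ n, (μ[fun ω => |Y n ω - (μ[Y n|F n]) ω| ^ r|F n]) ω ≤
        K ^ r * 4 * (1 + (μ[fun ω => |e n ω| ^ a|F n]) ω) := by
      refine ae_all_iff.2 fun n => ?_
      have h2 : μ[fun ω => |Y n ω - (μ[Y n|F n]) ω| ^ r|F n] ≤ᵐ[μ]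
          μ[(K ^ r * 4) • ((fun _ => (1:ℝ)) + fun ω => |e n ω| ^ a)|F n] :=
        condExp_mono (hξr n) (hbi n) (hξb.mono fun ω h => h n)
      have h3 := condExp_add (μ := μ) (integrable_const (1:ℝ)) (hea n) (F n)
      have h4 : μ[(fun _ : Ω => (1:ℝ))|F n] = fun _ => 1 := condExp_const (F.le n) 1
      have h5 := condExp_smul (μ := μ) (K ^ r * 4) ((fun _ => (1:ℝ)) + fun ω => |e n ω| ^ a) (F n)
      filter_upwards [h2, h3, h5] with ω h2 h3 h5
      refine h2.trans ?_
      rw [h5, Pi.smul_apply, h3, Pi.add_apply, h4, smul_eq_mul]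
    filter_upwards [h, hmom] with ω h hm
    obtain ⟨C, hC⟩ := hm
    refine ⟨K ^ r * 4 * (1 + C), fun n => (h n).trans ?_⟩
    have := hC n
    gcongr

lemma core {Ω : Type*} {m0 : MeasurableSpace Ω} {μ : Measure Ω} [IsProbabilityMeasure μ]
    (F : Filtration ℕ m0) (Q : ℕ) (e g W u : ℕ → Ω → ℝ) (σ σ2q a c : ℝ)
    (ha : 2 * (Q + 1) < a) (hc1 : 2 * (Q + 1) / a < c) (hc2 : c < 1)
    (he : ∀ n, StronglyMeasurable[F (n + 1)] (e n))
    (hei : ∀ n, Integrable (e n) μ)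
    (hea : ∀ n, Integrable (fun ω => |e n ω| ^ a) μ)
    (he0 : ∀ n, μ[e n|F n] =ᵐ[μ] 0)
    (he2 : ∀ n, μ[fun ω => e n ω ^ 2|F n] =ᵐ[μ] fun _ => σ ^ 2)
    (heq0 : ∀ n, μ[fun ω => e n ω ^ (2 * (Q + 1))|F n] =ᵐ[μ] fun _ => σ2q)
    (hmom : ∀ᵐ ω ∂μ, ∃ C : ℝ, ∀ n, (μ[fun ω => |e n ω| ^ a|F n]) ω ≤ C)
    (hg : ∀ n, StronglyMeasurable[F n] (g n)) (hW : ∀ n, StronglyMeasurable[F n] (W n))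
    (hu : ∀ n, StronglyMeasurable[F n] (u n))
    (hg0 : ∀ n ω, 0 ≤ g n ω) (hg1 : ∀ n ω, g n ω ≤ 1) (hW0 : ∀ n ω, 0 ≤ W n ω)
    (huu : ∀ n ω, u n ω ^ 2 ≤ g n ω * ((1 - g n ω) * W n ω))
    (hrec : ∀ n ω, W (n + 1) ω = (1 - g n ω) * W n ω + 2 * u n ω * e n ω + g n ω * e n ω ^ 2)
    (hWi : Integrable (fun ω => W 0 ω ^ (Q + 1)) μ)
    (hs : ∀ᵐ ω ∂μ, (fun n => ∑ k ∈ range n, g k ω) =o[atTop] fun n : ℕ => (n:ℝ) ^ c) :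
    ∀ᵐ ω ∂μ,
      ((fun n => ∑ k ∈ range n, g k ω * W k ω ^ (Q + 1)) =o[atTop] fun n : ℕ => (n:ℝ) ^ ((1 + c) / 2)) ∧
      ((fun n => ∑ k ∈ range n, √(g k ω * W k ω) * |e k ω| ^ (2 * Q + 1)) =o[atTop]
        fun n : ℕ => (n:ℝ) ^ ((1 + c) / 2)) ∧
      ((fun n => ∑ k ∈ range n, (e k ω ^ (2 * (Q + 1)) - σ2q)) =o[atTop]
        fun n : ℕ => (n:ℝ) ^ ((1 + c) / 2)) := by
  set q : ℝ := (Q:ℝ) + 1 with hq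
  have hq0 : 1 ≤ q := by simp [hq]
  have ha0 : 0 < a := by linarith
  have hc0 : 0 < c := lt_trans (by positivity) hc1
  set β := (1 + c) / 2 with hβ
  have hcβ : c < β := by rw [hβ]; linarith
  have hβ1 : β < 1 := by rw [hβ]; linarith
  obtain ⟨r, hr1, hr2, hra, hβr⟩ : ∃ r : ℝ, 1 < r ∧ r ≤ 2 ∧ 2 * q * r ≤ a ∧ 1 < β * r := by
    rcases le_total 2 (a / (2 * q)) with h | h
    · refine ⟨2, by norm_num, le_rfl, ?_, by rw [hβ]; linarith⟩
      rw [le_div_iff₀ (by positivity)] at h; linarith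
    · refine ⟨a / (2 * q), ?_, h, by field_simp; exact le_rfl, ?_⟩
      · rw [lt_div_iff₀ (by positivity)]; linarith
      · have h1 : 1 < c * (a / (2 * q)) := by
          rw [div_lt_iff₀ ha0] at hc1
          rw [← mul_div_assoc, lt_div_iff₀ (by positivity)]; linarith
        have : 0 < a / (2 * q) := by positivity
        nlinarith
  have hra' : 2 * ((Q + 1 : ℕ) : ℝ) * r ≤ a := by push_cast; exact hra
  obtain ⟨c', hc', hc'β, hc'r⟩ : ∃ c', c < c' ∧ c' < β ∧ c' < c * r := by
    have : c < min β (c * r) := lt_min hcβ (by nlinarith)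
    obtain ⟨c', h1, h2⟩ := exists_between this
    exact ⟨c', h1, h2.trans_le (min_le_left _ _), h2.trans_le (min_le_right _ _)⟩
  have hc'0 : 0 < c' := by linarith
  have em : ∀ n, StronglyMeasurable (e n) := fun n => (he n).mono (F.le _)
  have heq : ∀ n, Integrable (fun ω => e n ω ^ (2 * (Q + 1))) μ := by
    intro n
    refine Integrable.mono' (((integrable_const 1).add (hea n)).const_mul (1 ^ (1:ℝ) * 4)) ((em n).pow _).aestronglyMeasurable ?_
    refine Eventually.of_forall fun ω => ?_
    have := rpow_bound (r := 1) (a := a) (x := e n ω) (y := e n ω ^ (2 * (Q + 1))) (K := 1) (q := Q + 1)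
      (by norm_num) (by norm_num) (by push_cast; nlinarith) (by norm_num) ?_
    · rwa [Real.rpow_one] at this
    · have h0 : 0 ≤ e n ω ^ (2 * (Q + 1)) := by rw [pow_mul]; positivity
      rw [abs_of_nonneg h0]; linarith
  have hk : ∀ k : ℕ, (1:ℝ) ≤ (k:ℝ) + 1 := fun k => by linarith [k.cast_nonneg (α := ℝ)]
  have hkp : ∀ k : ℕ, (0:ℝ) < (k:ℝ) + 1 := fun k => by positivity
  -- bounds on powers
  have hpow1 : ∀ (x : ℝ) (k : ℕ), x ≤ 2 * (Q + 1) → 0 ≤ x → True := fun _ _ _ _ => trivial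
  have hYle : ∀ (j : ℕ), j ≤ 2 * (Q + 1) → ∀ x : ℝ, |x| ^ j ≤ 1 + x ^ (2 * (Q + 1)) := by
    intro j hj x
    have hx : x ^ (2 * (Q + 1)) = |x| ^ (2 * (Q + 1)) := by rw [pow_mul, pow_mul, sq_abs]
    rw [hx]
    rcases le_total |x| 1 with h | h
    · have := pow_le_one₀ (abs_nonneg x) h (n := j)
      have h2 : 0 ≤ |x| ^ (2 * (Q + 1)) := by positivity
      linarith
    · have := pow_le_pow_right₀ h hj
      linarith
  have hsg : ∀ᵐ ω ∂μ, Summable fun k : ℕ => g k ω * (((k:ℝ) + 1) ^ c')⁻¹ := by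
    filter_upwards [hs] with ω h
    have := abel_summable (fun k => hg0 k ω) hc0 hc' h
    simpa only [div_eq_mul_inv] using this
  have hsW := lyap_summable F Q e g W u (fun k => (((k:ℝ) + 1) ^ c')⁻¹) σ2q he hei heq he0 heq0 hg hW hu
    hg0 hg1 hW0 huu hrec hWi (fun n => by positivity)
    (fun n => inv_le_one_of_one_le₀ (Real.one_le_rpow (hk n) hc'0.le))
    (fun n => by
      push_cast
      gcongr
      linarith) hsg
  have hsW1 : ∀ᵐ ω ∂μ, Summable fun k : ℕ => g k ω * W k ω * (((k:ℝ) + 1) ^ c')⁻¹ := by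
    filter_upwards [hsg, hsW] with ω h1 h2
    refine Summable.of_nonneg_of_le (fun k => ?_) (fun k => ?_) (h1.add h2)
    · have := hg0 k ω
      have := hW0 k ω
      positivity
    · have h3 : W k ω ≤ 1 + W k ω ^ (Q + 1) := by
        rcases le_total (W k ω) 1 with h | h
        · have := pow_nonneg (hW0 k ω) (Q + 1); linarith
        · have := le_self_pow₀ h (n := Q + 1) (by omega); linarith
      have h4 := hg0 k ω
      calc g k ω * W k ω * (((k:ℝ) + 1) ^ c')⁻¹ ≤ g k ω * (1 + W k ω ^ (Q + 1)) * (((k:ℝ) + 1) ^ c')⁻¹ := by gcongr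
        _ = _ := by ring
  have hinv : ∀ (k : ℕ) (x y : ℝ), x ≤ y → (((k:ℝ) + 1) ^ y)⁻¹ ≤ (((k:ℝ) + 1) ^ x)⁻¹ := by
    intro k x y hxy
    have := hkp k
    gcongr
    exact hk k
  have hsβ : Summable fun k : ℕ => (((k:ℝ) + 1) ^ (β * r))⁻¹ := by
    have := (summable_nat_add_iff (f := fun k : ℕ => ((k:ℝ) ^ (β * r))⁻¹) 1).2
      (Real.summable_nat_rpow_inv.2 hβr)
    simpa using this
  have hr0 : 0 < r := by linarith
  have hUpow : ∀ (k : ℕ) (z γ : ℝ), |z * (((k:ℝ) + 1) ^ γ)⁻¹| ^ r = |z| ^ r * (((k:ℝ) + 1) ^ (γ * r))⁻¹ := by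
    intro k z γ
    have := hkp k
    rw [abs_mul, abs_of_pos (show 0 < (((k:ℝ) + 1) ^ γ)⁻¹ by positivity), Real.mul_rpow (abs_nonneg _) (by positivity),
      Real.inv_rpow (by positivity), ← Real.rpow_mul (by positivity)]
  -- (1)
  have N1 := noise_conv F (Q + 1) hr1 hr2 hra' e (fun n ω => e n ω ^ (2 * (Q + 1))) (fun k _ => 1 * (((k:ℝ) + 1) ^ β)⁻¹) σ2q
    hea heq heq0 hmom (fun n => (he n).pow _) (fun n ω => by rw [pow_mul]; positivity) (fun n ω => by linarith)
    (fun n => stronglyMeasurable_const) (Eventually.of_forall fun ω => by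
      simp_rw [hUpow]; simpa using hsβ)
  -- (2)
  have N2 := noise_conv F (Q + 1) hr1 hr2 hra' e (fun n ω => |e n ω| ^ (2 * Q + 1))
    (fun k ω => √(g k ω * W k ω) * (((k:ℝ) + 1) ^ β)⁻¹) σ2q
    hea heq heq0 hmom (fun n => ((he n).norm).pow _) (fun n ω => by positivity) (fun n ω => hYle _ (by omega) _)
    (fun n => (Real.continuous_sqrt.comp_stronglyMeasurable ((hg n).mul (hW n))).mul stronglyMeasurable_const) (by
      filter_upwards [hsW1] with ω h1
      simp_rw [hUpow]
      refine Summable.of_nonneg_of_le (fun k => by positivity) (fun k => ?_) (hsβ.add h1)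
      have hgw : 0 ≤ g k ω * W k ω := mul_nonneg (hg0 _ _) (hW0 _ _)
      have h2 : |√(g k ω * W k ω)| ^ r ≤ 1 + g k ω * W k ω := by
        rw [abs_of_nonneg (Real.sqrt_nonneg _)]
        rcases le_total (√(g k ω * W k ω)) 1 with h | h
        · have := Real.rpow_le_one (Real.sqrt_nonneg _) h hr0.le
          linarith
        · have := Real.rpow_le_rpow_of_exponent_le h hr2
          rw [Real.rpow_two, Real.sq_sqrt hgw] at this
          linarith
      have h3 := hinv k c' (β * r) (by linarith)
      calc _ ≤ (1 + g k ω * W k ω) * (((k:ℝ) + 1) ^ (β * r))⁻¹ := by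
            have := hkp k
            gcongr
        _ = (((k:ℝ) + 1) ^ (β * r))⁻¹ + g k ω * W k ω * (((k:ℝ) + 1) ^ (β * r))⁻¹ := by ring
        _ ≤ _ := by gcongr)
  -- (4)
  have N4 := noise_conv F (Q + 1) hr1 hr2 hra' e (fun n ω => e n ω ^ 2)
    (fun k ω => g k ω * (((k:ℝ) + 1) ^ c)⁻¹) σ2q
    hea heq heq0 hmom (fun n => (he n).pow _) (fun n ω => by positivity)
    (fun n ω => by have := hYle 2 (by omega) (e n ω); rwa [sq_abs] at this)
    (fun n => (hg n).mul stronglyMeasurable_const) (by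
      filter_upwards [hsg] with ω h1
      simp_rw [hUpow]
      refine Summable.of_nonneg_of_le (fun k => by positivity) (fun k => ?_) h1
      have h3 := hinv k c' (c * r) hc'r.le
      have h4 : |g k ω| ^ r ≤ g k ω := by
        rw [abs_of_nonneg (hg0 _ _)]
        exact Real.rpow_le_self_of_le_one (hg0 _ _) (hg1 _ _) hr1.le
      have := hg0 k ω
      gcongr)
  -- (3)
  have he2i : ∀ n, Integrable (fun ω => |e n ω| ^ (2:ℝ)) μ := by
    intro n
    refine Integrable.mono' ((integrable_const 1).add (heq n)) ?_ (Eventually.of_forall fun ω => ?_)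
    · have := (em n).measurable
      exact ((by fun_prop : Measurable fun x : ℝ => |x| ^ (2:ℝ)).comp this).aestronglyMeasurable
    · rw [Real.norm_of_nonneg (by positivity), Real.rpow_two]
      exact hYle 2 (by omega) (e n ω)
  have N3 := mart_conv F (r := 2) (by norm_num) le_rfl e (fun k ω => u k ω * (((k:ℝ) + 1) ^ c)⁻¹) he he2i he0
    (by
      filter_upwards [ae_all_iff.2 he2] with ω h
      refine ⟨σ ^ 2, fun n => ?_⟩
      simp only [Real.rpow_two, sq_abs]
      exact (h n).le) (fun n => (hu n).mul stronglyMeasurable_const) (by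
      filter_upwards [hsW1] with ω h1
      refine Summable.of_nonneg_of_le (fun k => by positivity) (fun k => ?_) h1
      have hkk := hkp k
      have h3 := hinv k c' (c * 2) (by nlinarith)
      have e1 : |u k ω * (((k:ℝ) + 1) ^ c)⁻¹| ^ (2:ℝ) = u k ω ^ 2 * (((k:ℝ) + 1) ^ (c * 2))⁻¹ := by
        rw [Real.rpow_two, sq_abs, mul_pow, inv_pow, Real.rpow_mul hkk.le, Real.rpow_two]
      rw [e1]
      have h4 : u k ω ^ 2 ≤ g k ω * W k ω := by
        refine (huu k ω).trans ?_
        have := hg0 k ω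
        have := hW0 k ω
        refine mul_le_mul_of_nonneg_left ?_ (hg0 _ _)
        nlinarith
      have : 0 ≤ g k ω * W k ω := mul_nonneg (hg0 _ _) (hW0 _ _)
      gcongr)
  filter_upwards [hs, hsW, N1.2, N2.1, N2.2, N3, N4.2, ae_all_iff.2 he2, ae_all_iff.2 heq0] with
    ω hs hsW hN1 hN2b hN2 hN3 hN4 he2 heq0
  obtain ⟨T1, hT1⟩ := hN1
  obtain ⟨T2, hT2⟩ := hN2
  obtain ⟨T3, hT3⟩ := hN3
  obtain ⟨T4, hT4⟩ := hN4
  have o1 := kronecker (x := fun k => e k ω ^ (2 * (Q + 1)) - σ2q) (γ := β) (T := T1) (by linarith) (by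
    refine hT1.congr fun n => sum_congr rfl fun k _ => ?_
    rw [heq0 k]; ring)
  have o2 := kronecker (x := fun k => √(g k ω * W k ω) * (|e k ω| ^ (2 * Q + 1) - (μ[fun ω => |e k ω| ^ (2 * Q + 1)|F k]) ω))
    (γ := β) (T := T2) (by linarith) (by
    refine hT2.congr fun n => sum_congr rfl fun k _ => ?_
    ring)
  have o3 := kronecker (x := fun k => u k ω * e k ω) (γ := c) (T := T3) hc0 (by
    refine hT3.congr fun n => sum_congr rfl fun k _ => ?_
    ring)
  have o4 := kronecker (x := fun k => g k ω * (e k ω ^ 2 - σ ^ 2)) (γ := c) (T := T4) hc0 (by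
    refine hT4.congr fun n => sum_congr rfl fun k _ => ?_
    rw [he2 k]; ring)
  have oW : (fun n => ∑ k ∈ range n, g k ω * W k ω ^ (Q + 1)) =o[atTop] fun n : ℕ => (n:ℝ) ^ β := by
    have hsum : Summable fun k : ℕ => g k ω * W k ω ^ (Q + 1) * (((k:ℝ) + 1) ^ β)⁻¹ := by
      have hnn : ∀ k, 0 ≤ g k ω * W k ω ^ (Q + 1) := fun k => mul_nonneg (hg0 _ _) (pow_nonneg (hW0 _ _) _)
      refine Summable.of_nonneg_of_le (fun k => mul_nonneg (hnn k) (by positivity)) (fun k => ?_) hsW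
      exact mul_le_mul_of_nonneg_left (hinv k c' β hc'β.le) (hnn k)
    exact kronecker (by linarith) (by simpa only [div_eq_mul_inv] using hsum.hasSum.tendsto_sum_nat)
  -- sum of g W
  have hgW : ∀ n, ∑ k ∈ range n, g k ω * W k ω + W n ω = W 0 ω + 2 * ∑ k ∈ range n, u k ω * e k ω
      + ∑ k ∈ range n, g k ω * (e k ω ^ 2 - σ ^ 2) + σ ^ 2 * ∑ k ∈ range n, g k ω := by
    intro n
    induction n with
    | zero => simp
    | succ n ih =>
      simp only [sum_range_succ]
      rw [hrec]
      linarith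
  have ogW : (fun n => ∑ k ∈ range n, g k ω * W k ω) =o[atTop] fun n : ℕ => (n:ℝ) ^ c := by
    have hconst : (fun _ : ℕ => W 0 ω) =o[atTop] fun n : ℕ => (n:ℝ) ^ c := by
      rw [isLittleO_const_left]; right
      exact tendsto_norm_atTop_atTop.comp ((tendsto_rpow_atTop hc0).comp tendsto_natCast_atTop_atTop)
    have hall := ((hconst.add (o3.const_mul_left 2)).add o4).add (hs.const_mul_left (σ ^ 2))
    refine IsBigO.trans_isLittleO (IsBigO.of_bound 1 (Eventually.of_forall fun n => ?_)) hall
    rw [one_mul, Real.norm_of_nonneg (sum_nonneg fun k _ => mul_nonneg (hg0 _ _) (hW0 _ _))]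
    refine le_trans ?_ (le_abs_self _)
    have := hgW n
    have := hW0 n ω
    linarith
  have hρ : (fun n => ∑ k ∈ range n, √(g k ω * W k ω)) =o[atTop] fun n : ℕ => (n:ℝ) ^ β := by
    refine IsLittleO.of_pow (n := 2) ?_ (by norm_num)
    have h1 : (fun n : ℕ => (n:ℝ) * ∑ k ∈ range n, g k ω * W k ω) =o[atTop] fun n : ℕ => (n:ℝ) * (n:ℝ) ^ c :=
      (isBigO_refl _ _).mul_isLittleO ogW
    refine IsBigO.trans_isLittleO (IsBigO.of_bound 1 (Eventually.of_forall fun n => ?_)) (h1.trans_isBigO (IsBigO.of_bound 1 ?_))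
    · rw [one_mul, Pi.pow_apply, Real.norm_of_nonneg (by positivity)]
      refine le_trans ?_ (le_abs_self _)
      have := sq_sum_le_card_mul_sum_sq (s := range n) (f := fun k => √(g k ω * W k ω))
      rw [card_range] at this
      refine this.trans (le_of_eq ?_)
      congr 1
      exact sum_congr rfl fun k _ => Real.sq_sqrt (mul_nonneg (hg0 _ _) (hW0 _ _))
    · filter_upwards [eventually_gt_atTop 0] with n hn
      have hn' : (0:ℝ) < n := by exact_mod_cast hn
      rw [one_mul, Pi.pow_apply, ← Real.rpow_two, ← Real.rpow_mul hn'.le, hβ,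
        show (1 + c) / 2 * 2 = 1 + c by ring, Real.rpow_add hn', Real.rpow_one]
  refine ⟨oW, ?_, o1⟩
  have h5 : (fun n => ∑ k ∈ range n, √(g k ω * W k ω) * (μ[fun ω => |e k ω| ^ (2 * Q + 1)|F k]) ω) =o[atTop]
      fun n : ℕ => (n:ℝ) ^ β := by
    refine IsBigO.trans_isLittleO (IsBigO.of_bound (1 + σ2q) (Eventually.of_forall fun n => ?_)) hρ
    rw [Real.norm_of_nonneg (sum_nonneg fun k _ => mul_nonneg (Real.sqrt_nonneg _) (hN2b k).1),
      Real.norm_of_nonneg (sum_nonneg fun k _ => Real.sqrt_nonneg _), mul_sum]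
    refine sum_le_sum fun k _ => ?_
    rw [mul_comm]
    exact mul_le_mul_of_nonneg_right (hN2b k).2 (Real.sqrt_nonneg _)
  refine (o2.add h5).congr_left fun n => ?_
  rw [← sum_add_distrib]
  exact sum_congr rfl fun k _ => by ring


lemma dot_cs {d : ℕ} (x y : Fin d → ℝ) : (x ⬝ᵥ y) ^ 2 ≤ (x ⬝ᵥ x) * (y ⬝ᵥ y) := by
  have := Finset.sum_mul_sq_le_sq_mul_sq Finset.univ x y
  simpa [dotProduct, sq] using this

lemma dot_self_nn {d : ℕ} (x : Fin d → ℝ) : 0 ≤ x ⬝ᵥ x :=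
  Finset.sum_nonneg fun _ _ => mul_self_nonneg _

/-- squared Frobenius norm -/
def frob {d : ℕ} (A : Matrix (Fin d) (Fin d) ℝ) : ℝ := ∑ i, ∑ j, A i j ^ 2

lemma frob_nn {d : ℕ} (A : Matrix (Fin d) (Fin d) ℝ) : 0 ≤ frob A := by
  unfold frob; positivity

lemma frob_cont {d : ℕ} : Continuous (frob (d := d)) := by
  unfold frob
  fun_prop

lemma mv_sq {d : ℕ} (A : Matrix (Fin d) (Fin d) ℝ) (y : Fin d → ℝ) :
    (A *ᵥ y) ⬝ᵥ (A *ᵥ y) ≤ frob A * (y ⬝ᵥ y) := by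
  unfold frob
  rw [Finset.sum_mul]
  refine Finset.sum_le_sum fun i _ => ?_
  have := dot_cs (fun j => A i j) y
  simp only [mulVec, ← sq]
  refine this.trans (le_of_eq ?_)
  congr 1
  simp [dotProduct, sq]

/-- deterministic version of the matrix -/
def Sd {d : ℕ} (S : Matrix (Fin d) (Fin d) ℝ) (φ : ℕ → Fin d → ℝ) (n : ℕ) :
    Matrix (Fin d) (Fin d) ℝ := S + ∑ k ∈ Finset.range (n + 1), vecMulVec (φ k) (φ k)

/-- trace process -/
def tS {d : ℕ} (S : Matrix (Fin d) (Fin d) ℝ) (φ : ℕ → Fin d → ℝ) (k : ℕ) : ℝ :=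
  S.trace + ∑ i ∈ Finset.range k, φ i ⬝ᵥ φ i

/-- martingale part -/
def Mv {d : ℕ} (S : Matrix (Fin d) (Fin d) ℝ) (θ : Fin d → ℝ) (φ : ℕ → Fin d → ℝ)
    (e : ℕ → ℝ) (k : ℕ) : Fin d → ℝ :=
  -(S *ᵥ θ) + ∑ i ∈ Finset.range k, e i • φ i

lemma tS_succ {d : ℕ} (S : Matrix (Fin d) (Fin d) ℝ) (φ : ℕ → Fin d → ℝ) (k : ℕ) :
    tS S φ (k + 1) = tS S φ k + φ k ⬝ᵥ φ k := by
  simp [tS, Finset.sum_range_succ, add_assoc]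

lemma Mv_succ {d : ℕ} (S : Matrix (Fin d) (Fin d) ℝ) (θ : Fin d → ℝ) (φ : ℕ → Fin d → ℝ)
    (e : ℕ → ℝ) (k : ℕ) : Mv S θ φ e (k + 1) = Mv S θ φ e k + e k • φ k := by
  simp [Mv, Finset.sum_range_succ, add_assoc]

lemma trace_Sd {d : ℕ} (S : Matrix (Fin d) (Fin d) ℝ) (φ : ℕ → Fin d → ℝ) (n : ℕ) :
    (Sd S φ n).trace = tS S φ (n + 1) := by
  simp [Sd, tS, Matrix.trace_add, Matrix.trace_sum, Matrix.trace_vecMulVec]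

lemma Sd_posDef {d : ℕ} {S : Matrix (Fin d) (Fin d) ℝ} (hS : S.PosDef) (φ : ℕ → Fin d → ℝ)
    (n : ℕ) : (Sd S φ n).PosDef := by
  unfold Sd
  refine hS.add_posSemidef ?_
  refine Matrix.posSemidef_sum _ fun k _ => ?_
  simpa using Matrix.posSemidef_vecMulVec_self_star (φ k)

lemma tS_pos {d : ℕ} (hd : 0 < d) {S : Matrix (Fin d) (Fin d) ℝ} (hS : S.PosDef)
    (φ : ℕ → Fin d → ℝ) (k : ℕ) : 0 < tS S φ k := by
  have : Nonempty (Fin d) := ⟨⟨0, hd⟩⟩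
  have h1 : 0 < S.trace := hS.trace_pos
  have h2 : 0 ≤ ∑ i ∈ Finset.range k, φ i ⬝ᵥ φ i :=
    Finset.sum_nonneg fun i _ => dot_self_nn _
  unfold tS; linarith

lemma rec_eq {d : ℕ} (s t e : ℝ) (hs : 0 < s) (x m : Fin d → ℝ) (ht : t = s + x ⬝ᵥ x) :
    ((m + e • x) ⬝ᵥ (m + e • x)) / t
      = (1 - (x ⬝ᵥ x) / t) * ((m ⬝ᵥ m) / s) + 2 * ((x ⬝ᵥ m) / t) * e + (x ⬝ᵥ x) / t * e ^ 2 := by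
  have ht0 : 0 < t := by rw [ht]; have := dot_self_nn x; linarith
  have h : 1 - (x ⬝ᵥ x) / t = s / t := by
    field_simp; linarith
  rw [h]
  simp only [add_dotProduct, dotProduct_add, smul_dotProduct, dotProduct_smul, smul_eq_mul,
    dotProduct_comm m x]
  field_simp
  ring

lemma u_le {d : ℕ} (s t : ℝ) (hs : 0 < s) (x m : Fin d → ℝ) (ht : t = s + x ⬝ᵥ x) :
    ((x ⬝ᵥ m) / t) ^ 2 ≤ (x ⬝ᵥ x) / t * ((1 - (x ⬝ᵥ x) / t) * ((m ⬝ᵥ m) / s)) := by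
  have ht0 : 0 < t := by rw [ht]; have := dot_self_nn x; linarith
  have h : 1 - (x ⬝ᵥ x) / t = s / t := by
    field_simp; linarith
  rw [h]
  have := dot_cs x m
  have h2 : (x ⬝ᵥ x) / t * (s / t * ((m ⬝ᵥ m) / s)) = ((x ⬝ᵥ x) * (m ⬝ᵥ m)) / t ^ 2 := by
    field_simp
  rw [h2, div_pow]
  gcongr

/-- quadratic lower bound for the inverse form -/
lemma inv_form_lower {d : ℕ} {A : Matrix (Fin d) (Fin d) ℝ} (hA : A.PosDef) (x : Fin d → ℝ) :
    x ⬝ᵥ x ≤ (1 + frob A) / 2 * (x ⬝ᵥ (A⁻¹ *ᵥ x)) := by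
  set z := A⁻¹ *ᵥ x with hz
  have hu : IsUnit A.det := hA.det_pos.ne'.isUnit
  have hAz : A *ᵥ z = x := by
    rw [hz, mulVec_mulVec, Matrix.mul_nonsing_inv _ hu, one_mulVec]
  have hsym : Aᵀ = A := by have := hA.1; simpa [Matrix.IsHermitian] using this
  set K := (1 + frob A) / 2
  have hK : 0 < K := by have := frob_nn A; simp only [K]; positivity
  have h1 : x ⬝ᵥ (A *ᵥ x) ≤ K * (x ⬝ᵥ x) := by
    have h2 := mv_sq A x
    have h3 := dot_self_nn (x - A *ᵥ x)
    simp only [sub_dotProduct, dotProduct_sub, dotProduct_comm (A *ᵥ x) x] at h3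
    simp only [K]; linarith
  have hzx : z ⬝ᵥ (A *ᵥ x) = x ⬝ᵥ x := by
    rw [dotProduct_mulVec, ← mulVec_transpose, hsym, hAz]
  have h4 : 0 ≤ (z - K⁻¹ • x) ⬝ᵥ (A *ᵥ (z - K⁻¹ • x)) := by
    simpa using hA.posSemidef.dotProduct_mulVec_nonneg (z - K⁻¹ • x)
  simp only [mulVec_sub, mulVec_smul, sub_dotProduct, dotProduct_sub, smul_dotProduct,
    dotProduct_smul, smul_eq_mul, hAz, hzx, dotProduct_comm z x] at h4
  have h5 : K⁻¹ * (K⁻¹ * (x ⬝ᵥ (A *ᵥ x))) ≤ K⁻¹ * (K⁻¹ * (K * (x ⬝ᵥ x))) := by gcongr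
  rw [inv_mul_cancel_left₀ hK.ne'] at h5
  have h6 : K⁻¹ * (x ⬝ᵥ x) ≤ x ⬝ᵥ z := by linarith
  rwa [inv_mul_le_iff₀ hK] at h6

section path
variable {d : ℕ} (hd : 0 < d) {S L : Matrix (Fin d) (Fin d) ℝ} (hS : S.PosDef) (hL : L.PosDef)
  (φ : ℕ → Fin d → ℝ) (α : ℕ → ℝ) (hα : ∀ n, 0 < α n)
  (hconv : Tendsto (fun n => (α n)⁻¹ • Sd S φ n) atTop (𝓝 L))

lemma trace_lim (hconv : Tendsto (fun n => (α n)⁻¹ • Sd S φ n) atTop (𝓝 L)) :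
    Tendsto (fun n => tS S φ (n + 1) / α n) atTop (𝓝 L.trace) := by
  have h : Continuous fun A : Matrix (Fin d) (Fin d) ℝ => A.trace := by
    unfold Matrix.trace; fun_prop
  have := (h.tendsto L).comp hconv
  refine this.congr fun n => ?_
  simp [Matrix.trace_smul, trace_Sd, div_eq_inv_mul]

include hd hS hL hα hconv in
lemma path_a {c : ℝ} (hc : 0 < c)
    (hlog : (fun n => Real.log ((Sd S φ n).det)) =o[atTop] fun n : ℕ => (n : ℝ) ^ c) :
    (fun n => ∑ k ∈ range n, (φ k ⬝ᵥ φ k) / tS S φ (k + 1)) =o[atTop]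
      fun n : ℕ => (n : ℝ) ^ c := by
  have : Nonempty (Fin d) := ⟨⟨0, hd⟩⟩
  have htr := trace_lim φ α hconv
  have hLt : 0 < L.trace := hL.trace_pos
  have hLd : 0 < L.det := hL.det_pos
  have hdet : Tendsto (fun n => ((α n)⁻¹ • Sd S φ n).det) atTop (𝓝 L.det) :=
    ((Continuous.matrix_det continuous_id).tendsto L).comp hconv
  have h1 : Tendsto (fun n => Real.log (tS S φ (n + 1) / α n)
      - (1 / (d:ℝ)) * Real.log (((α n)⁻¹ • Sd S φ n).det)) atTop
      (𝓝 (Real.log L.trace - (1 / (d:ℝ)) * Real.log L.det)) :=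
    (htr.log hLt.ne').sub ((hdet.log hLd.ne').const_mul _)
  have hn : Tendsto (fun n : ℕ => (n : ℝ) ^ c) atTop atTop :=
    (tendsto_rpow_atTop hc).comp tendsto_natCast_atTop_atTop
  have hone : ∀ x : ℝ, (fun _ : ℕ => x) =o[atTop] fun n : ℕ => (n : ℝ) ^ c := fun x =>
    isLittleO_const_left.2 (Or.inr (tendsto_norm_atTop_atTop.comp hn))
  have h2 : (fun n => Real.log (tS S φ (n + 1) / α n)
      - (1 / (d:ℝ)) * Real.log (((α n)⁻¹ • Sd S φ n).det)) =o[atTop]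
      fun n : ℕ => (n : ℝ) ^ c := (h1.isBigO_one ℝ).trans_isLittleO (hone 1)
  have h3 : (fun n => Real.log (tS S φ (n + 1))) =o[atTop] fun n : ℕ => (n : ℝ) ^ c := by
    refine (h2.add (hlog.const_mul_left (1 / (d:ℝ)))).congr_left fun n => ?_
    have hdp : 0 < (Sd S φ n).det := (Sd_posDef hS φ n).det_pos
    have hd' : (d:ℝ) ≠ 0 := by positivity
    rw [Matrix.det_smul, Real.log_div (tS_pos hd hS φ _).ne' (hα n).ne',
      Real.log_mul (pow_pos (inv_pos.2 (hα n)) _).ne' hdp.ne', Real.log_pow, Real.log_inv]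
    simp only [Fintype.card_fin]
    field_simp
    ring
  have h4 := h3.sub (hone (Real.log (tS S φ 0)))
  refine IsBigO.trans_isLittleO (IsBigO.of_bound 1 (Eventually.of_forall fun n => ?_)) h4
  have hg0 : ∀ k, 0 ≤ (φ k ⬝ᵥ φ k) / tS S φ (k + 1) := fun k =>
    div_nonneg (dot_self_nn _) (tS_pos hd hS φ _).le
  have hb : ∀ n, ∑ k ∈ range n, (φ k ⬝ᵥ φ k) / tS S φ (k + 1)
      ≤ Real.log (tS S φ n) - Real.log (tS S φ 0) := by
    intro n
    induction n with
    | zero => simp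
    | succ k ih =>
      rw [Finset.sum_range_succ]
      have ha := tS_pos hd hS φ k
      have hb := tS_pos hd hS φ (k + 1)
      have h := Real.log_le_sub_one_of_pos (div_pos ha hb)
      rw [Real.log_div ha.ne' hb.ne'] at h
      have h' : (φ k ⬝ᵥ φ k) / tS S φ (k + 1) = 1 - tS S φ k / tS S φ (k + 1) := by
        have := tS_succ S φ k
        field_simp
        linarith
      linarith
  have h5 := hb (n + 1)
  rw [Finset.sum_range_succ] at h5
  have h6 := hg0 n
  have h7 : 0 ≤ ∑ k ∈ range n, (φ k ⬝ᵥ φ k) / tS S φ (k + 1) :=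
    Finset.sum_nonneg fun k _ => hg0 k
  rw [one_mul, Real.norm_of_nonneg h7]
  refine le_trans ?_ (le_abs_self _)
  linarith

include hd hS hL hα hconv in
lemma path_g (hf : Tendsto (fun n => φ n ⬝ᵥ ((Sd S φ n)⁻¹ *ᵥ φ n)) atTop (𝓝 0)) :
    Tendsto (fun n => (φ n ⬝ᵥ φ n) / tS S φ (n + 1)) atTop (𝓝 0) := by
  have : Nonempty (Fin d) := ⟨⟨0, hd⟩⟩
  have htr := trace_lim φ α hconv
  have hLt : 0 < L.trace := hL.trace_pos
  have hfr : Tendsto (fun n => frob ((α n)⁻¹ • Sd S φ n)) atTop (𝓝 (frob L)) :=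
    (frob_cont.tendsto L).comp hconv
  have h1 := (((hfr.const_add 1).div_const 2).mul hf).div htr hLt.ne'
  rw [mul_zero, zero_div] at h1
  refine squeeze_zero (fun n => div_nonneg (dot_self_nn _) (tS_pos hd hS φ _).le) (fun n => ?_) h1
  have hA : ((α n)⁻¹ • Sd S φ n).PosDef := (Sd_posDef hS φ n).smul (inv_pos.2 (hα n))
  have h2 := inv_form_lower hA (φ n)
  have hu : IsUnit (Sd S φ n).det := (Sd_posDef hS φ n).det_pos.ne'.isUnit
  have hinv : ((α n)⁻¹ • Sd S φ n)⁻¹ = α n • (Sd S φ n)⁻¹ := by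
    refine Matrix.inv_eq_left_inv ?_
    rw [smul_mul_smul_comm, mul_inv_cancel₀ (hα n).ne', Matrix.nonsing_inv_mul _ hu, one_smul]
  rw [hinv, smul_mulVec, dotProduct_smul, smul_eq_mul] at h2
  have h3 := tS_pos hd hS φ (n + 1)
  have h4 := hα n
  simp only [Pi.div_apply]
  rw [div_le_div_iff₀ h3 (by positivity), mul_div_assoc', div_le_iff₀ h4]
  nlinarith

include hd hS hL hα hconv in
lemma path_b (hf : Tendsto (fun n => φ n ⬝ᵥ ((Sd S φ n)⁻¹ *ᵥ φ n)) atTop (𝓝 0)) :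
    ∃ B : ℝ, 0 ≤ B ∧ ∀ᶠ k in atTop, ∀ m : Fin d → ℝ,
      (((Sd S φ (k - 1))⁻¹ *ᵥ m) ⬝ᵥ φ k) ^ 2
        ≤ B * ((φ k ⬝ᵥ φ k) / tS S φ (k + 1) * ((m ⬝ᵥ m) / tS S φ k)) := by
  have : Nonempty (Fin d) := ⟨⟨0, hd⟩⟩
  have htr := trace_lim φ α hconv
  have hLt : 0 < L.trace := hL.trace_pos
  have hLu : IsUnit L.det := hL.det_pos.ne'.isUnit
  have hinvc : Tendsto (fun n => ((α n)⁻¹ • Sd S φ n)⁻¹) atTop (𝓝 L⁻¹) := by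
    have : ContinuousAt (fun A : Matrix (Fin d) (Fin d) ℝ => A⁻¹) L := by
      refine continuousAt_matrix_inv L ?_
      have h : ContinuousAt (fun x : ℝ => x⁻¹) L.det := continuousAt_inv₀ hL.det_pos.ne'
      simpa [Ring.inverse_eq_inv'] using h
    exact this.tendsto.comp hconv
  have hfr : Tendsto (fun n => frob (((α n)⁻¹ • Sd S φ n)⁻¹)) atTop (𝓝 (frob L⁻¹)) :=
    (frob_cont.tendsto _).comp hinvc
  have hg := path_g hd hS hL φ α hα hconv hf
  have e1 : ∀ᶠ n in atTop, tS S φ (n + 1) / α n < L.trace + 1 :=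
    htr.eventually (gt_mem_nhds (by linarith))
  have e2 : ∀ᶠ n in atTop, frob (((α n)⁻¹ • Sd S φ n)⁻¹) < frob L⁻¹ + 1 :=
    hfr.eventually (gt_mem_nhds (by linarith))
  have e3 : ∀ᶠ n in atTop, (φ n ⬝ᵥ φ n) / tS S φ (n + 1) < 1 / 2 :=
    hg.eventually (gt_mem_nhds (by norm_num))
  have hF := frob_nn L⁻¹
  refine ⟨2 * (L.trace + 1) ^ 2 * (frob L⁻¹ + 1), by positivity, ?_⟩
  have e1' := (tendsto_sub_atTop_nat 1).eventually e1
  have e2' := (tendsto_sub_atTop_nat 1).eventually e2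
  filter_upwards [e1', e2', e3, eventually_ge_atTop 1] with k h1 h2 h3 hk m
  obtain ⟨n, rfl⟩ : ∃ n, k = n + 1 := ⟨k - 1, by omega⟩
  simp only [Nat.add_sub_cancel] at h1 h2 ⊢
  have hu : IsUnit (Sd S φ n).det := (Sd_posDef hS φ n).det_pos.ne'.isUnit
  have h4 := hα n
  set R := ((α n)⁻¹ • Sd S φ n)⁻¹ with hR
  have hinv : R = α n • (Sd S φ n)⁻¹ := by
    refine Matrix.inv_eq_left_inv ?_
    rw [smul_mul_smul_comm, mul_inv_cancel₀ (hα n).ne', Matrix.nonsing_inv_mul _ hu, one_smul]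
  have hinv' : (Sd S φ n)⁻¹ = (α n)⁻¹ • R := by
    rw [hinv, smul_smul, inv_mul_cancel₀ h4.ne', one_smul]
  rw [hinv', smul_mulVec, smul_dotProduct, smul_eq_mul, mul_pow]
  set x := φ (n + 1)
  set s := tS S φ (n + 1) with hs
  set t := tS S φ (n + 1 + 1) with ht
  have hst : t = s + x ⬝ᵥ x := tS_succ S φ (n + 1)
  have hs0 : 0 < s := tS_pos hd hS φ _
  have ht0 : 0 < t := tS_pos hd hS φ _
  have ht2 : t ≤ 2 * s := by rw [div_lt_iff₀ ht0] at h3; linarith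
  have h5 : s ≤ (L.trace + 1) * α n := by rw [div_lt_iff₀ h4] at h1; exact h1.le
  have h6 : ((R *ᵥ m) ⬝ᵥ x) ^ 2 ≤ ((frob L⁻¹ + 1) * (m ⬝ᵥ m)) * (x ⬝ᵥ x) := by
    refine (dot_cs _ _).trans ?_
    refine mul_le_mul_of_nonneg_right ((mv_sq R m).trans ?_) (dot_self_nn x)
    exact mul_le_mul_of_nonneg_right h2.le (dot_self_nn m)
  have h7 : s * t ≤ 2 * ((L.trace + 1) * α n) ^ 2 := by nlinarith
  have hm := dot_self_nn m
  have hx := dot_self_nn x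
  have h8 : (α n)⁻¹ ^ 2 ≤ 2 * (L.trace + 1) ^ 2 / (s * t) := by
    rw [inv_pow, ← one_div, div_le_div_iff₀ (by positivity) (by positivity)]
    linarith [mul_pow (L.trace + 1) (α n) 2]
  calc (α n)⁻¹ ^ 2 * ((R *ᵥ m) ⬝ᵥ x) ^ 2
      ≤ 2 * (L.trace + 1) ^ 2 / (s * t) * (((frob L⁻¹ + 1) * (m ⬝ᵥ m)) * (x ⬝ᵥ x)) := by
        gcongr
    _ = _ := by field_simp

end path

lemma pow_diff (q : ℕ) (π e : ℝ) :
    |(π + e) ^ (2 * (q + 1)) - e ^ (2 * (q + 1))|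
      ≤ 2 ^ (2 * (q + 1)) * (|π| * |e| ^ (2 * q + 1) + |π| ^ (2 * (q + 1))) := by
  have key : ∀ n : ℕ, |(π + e) ^ (n + 1) - e ^ (n + 1)|
      ≤ 2 ^ (n + 1) * (|π| * |e| ^ n + |π| ^ (n + 1)) - (|π| * |e| ^ n + |π| ^ (n + 1)) := by
    intro n
    have hπ := abs_nonneg π
    have he := abs_nonneg e
    induction n with
    | zero => simp; linarith
    | succ n ih =>
      have h1 : (π + e) ^ (n + 1 + 1) - e ^ (n + 1 + 1)
          = (π + e) * ((π + e) ^ (n + 1) - e ^ (n + 1)) + π * e ^ (n + 1) := by ring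
      have h2 : |(π + e) ^ (n + 1 + 1) - e ^ (n + 1 + 1)|
          ≤ (|π| + |e|) * |(π + e) ^ (n + 1) - e ^ (n + 1)| + |π| * |e| ^ (n + 1) := by
        rw [h1]
        refine (abs_add_le _ _).trans ?_
        rw [abs_mul, abs_mul, abs_pow]
        gcongr
        exact abs_add_le _ _
      set A := |π|
      set E := |e|
      have h3 : (A + E) * (A * E ^ n + A ^ (n + 1)) ≤ 2 * (A * E ^ (n + 1) + A ^ (n + 2)) := by
        have : A ^ 2 * E ^ n + A ^ (n + 1) * E ≤ A * E ^ (n + 1) + A ^ (n + 2) := by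
          have : A * ((A - E) * (A ^ n - E ^ n)) ≥ 0 := by
            refine mul_nonneg hπ ?_
            rcases le_total A E with h | h
            · exact mul_nonneg_of_nonpos_of_nonpos (by linarith)
                (by linarith [pow_le_pow_left₀ hπ h n])
            · exact mul_nonneg (by linarith) (by linarith [pow_le_pow_left₀ he h n])
          have e : A * ((A - E) * (A ^ n - E ^ n)) = A * E ^ (n + 1) + A ^ (n + 2)
              - (A ^ 2 * E ^ n + A ^ (n + 1) * E) := by ring
          linarith
        have e : (A + E) * (A * E ^ n + A ^ (n + 1)) = A ^ 2 * E ^ n + A ^ (n + 1) * E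
          + (A * E ^ (n + 1) + A ^ (n + 2)) := by ring
        linarith
      have h4 : (1:ℝ) ≤ 2 ^ (n + 1) := one_le_pow₀ (by norm_num)
      have h5 : (A + E) * |(π + e) ^ (n + 1) - e ^ (n + 1)|
          ≤ (2 ^ (n + 1) - 1) * (2 * (A * E ^ (n + 1) + A ^ (n + 2))) := by
        calc _ ≤ (A + E) * (2 ^ (n + 1) * (A * E ^ n + A ^ (n + 1)) - (A * E ^ n + A ^ (n + 1))) := by
              gcongr
          _ = (2 ^ (n + 1) - 1) * ((A + E) * (A * E ^ n + A ^ (n + 1))) := by ring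
          _ ≤ _ := by
            refine mul_le_mul_of_nonneg_left h3 (by linarith)
      have h6 : 0 ≤ A ^ (n + 2) := by positivity
      have e6 : (2 ^ (n + 1) - 1) * (2 * (A * E ^ (n + 1) + A ^ (n + 2)))
        = 2 ^ (n + 1 + 1) * (A * E ^ (n + 1) + A ^ (n + 2))
          - 2 * (A * E ^ (n + 1) + A ^ (n + 2)) := by ring
      have e7 : A ^ (n + 1 + 1) = A ^ (n + 2) := rfl
      rw [e7]
      linarith
  have := key (2 * q + 1)
  have h0 : 0 ≤ |π| * |e| ^ (2 * q + 1) + |π| ^ (2 * q + 1 + 1) := by positivity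
  have e : 2 * (q + 1) = 2 * q + 1 + 1 := by ring
  rw [e]
  linarith


lemma lsq_pred {Ω : Type*} {d : ℕ} {S : Matrix (Fin d) (Fin d) ℝ} (hS : S.PosDef)
    (Φ : ℕ → Ω → Fin d → ℝ) (X ε : ℕ → Ω → ℝ) (θ : Fin d → ℝ)
    (hmodel : ∀ n ω, X (n + 1) ω = θ ⬝ᵥ Φ n ω + ε (n + 1) ω) (n : ℕ) (ω : Ω) :
    X (n + 1 + 1) ω - lsq S Φ X (n + 1) ω ⬝ᵥ Φ (n + 1) ω
      = -(((Sd S (fun k => Φ k ω) n)⁻¹ *ᵥ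
          Mv S θ (fun k => Φ k ω) (fun k => ε (k + 1) ω) (n + 1)) ⬝ᵥ Φ (n + 1) ω)
        + ε (n + 1 + 1) ω := by
  have hu : IsUnit (Sd S (fun k => Φ k ω) n).det := (Sd_posDef hS _ n).det_pos.ne'.isUnit
  have h1 : ∑ k ∈ Finset.Icc 1 (n + 1), X k ω • Φ (k - 1) ω
      = ∑ i ∈ Finset.range (n + 1), X (i + 1) ω • Φ i ω := by
    rw [Finset.range_eq_Ico]
    exact (Finset.sum_Ico_add' (fun k => X k ω • Φ (k - 1) ω) 0 (n + 1) 1).symm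
  have h2 : ∑ i ∈ Finset.range (n + 1), X (i + 1) ω • Φ i ω
      = Sd S (fun k => Φ k ω) n *ᵥ θ
        + Mv S θ (fun k => Φ k ω) (fun k => ε (k + 1) ω) (n + 1) := by
    unfold Sd Mv
    rw [add_mulVec, sum_mulVec, add_add_add_comm, add_neg_cancel, zero_add,
      ← Finset.sum_add_distrib]
    refine Finset.sum_congr rfl fun i _ => ?_
    rw [hmodel, add_smul, vecMulVec_mulVec, dotProduct_comm]
    simp
  have h3 : lsq S Φ X (n + 1) ω = θ + (Sd S (fun k => Φ k ω) n)⁻¹ *ᵥ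
      Mv S θ (fun k => Φ k ω) (fun k => ε (k + 1) ω) (n + 1) := by
    unfold lsq
    rw [h1, h2, mulVec_add]
    change (Sd S (fun k => Φ k ω) n)⁻¹ *ᵥ _ + _ = _
    rw [mulVec_mulVec, Matrix.nonsing_inv_mul _ hu, one_mulVec]
    rfl
  rw [h3, hmodel, add_dotProduct]
  ring

lemma final_rate {c σ : ℝ} {C : ℕ → ℝ}
    (h : (fun n : ℕ => C n - n * σ) =o[atTop] fun n : ℕ => (n:ℝ) ^ ((1 + c) / 2)) :
    (fun n : ℕ => |C n / n - σ| ^ 2) =o[atTop] fun n : ℕ => (n : ℝ) ^ (c - 1) := by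
  have h1 := (h.mul h).mul_isBigO (isBigO_refl (fun n : ℕ => ((n:ℝ) ^ 2)⁻¹) atTop)
  refine h1.congr' ?_ ?_
  · filter_upwards [eventually_gt_atTop 0] with n hn
    have : (0:ℝ) < n := by exact_mod_cast hn
    rw [sq_abs]
    field_simp
  · filter_upwards [eventually_gt_atTop 0] with n hn
    have : (0:ℝ) < n := by exact_mod_cast hn
    rw [← Real.rpow_natCast, ← Real.rpow_add this, ← Real.rpow_neg this.le, ← Real.rpow_add this]
    congr 1
    push_cast
    ring

lemma final_sum {β : ℝ} (hβ : 0 < β) {x y : ℕ → ℝ} (hxy : ∀ᶠ k in atTop, |x k| ≤ y k)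
    (hy : (fun n => ∑ k ∈ range n, y k) =o[atTop] fun n : ℕ => (n:ℝ) ^ β) :
    (fun n => ∑ k ∈ range n, x k) =o[atTop] fun n : ℕ => (n:ℝ) ^ β := by
  obtain ⟨N, hN⟩ := eventually_atTop.1 hxy
  have hn : Tendsto (fun n : ℕ => (n : ℝ) ^ β) atTop atTop :=
    (tendsto_rpow_atTop hβ).comp tendsto_natCast_atTop_atTop
  have hone : ∀ x : ℝ, (fun _ : ℕ => x) =o[atTop] fun n : ℕ => (n : ℝ) ^ β := fun x =>
    isLittleO_const_left.2 (Or.inr (tendsto_norm_atTop_atTop.comp hn))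
  have h2 := hy.add (hone (∑ k ∈ range N, (|x k| - y k)))
  refine IsBigO.trans_isLittleO (IsBigO.of_bound 1 ?_) h2
  filter_upwards [eventually_ge_atTop N] with n hn
  rw [one_mul]
  refine le_trans ?_ (le_abs_self _)
  have h3 : ∑ k ∈ range n, (|x k| - y k) ≤ ∑ k ∈ range N, (|x k| - y k) := by
    rw [← Finset.sum_range_add_sum_Ico _ hn]
    have : ∑ k ∈ Ico N n, (|x k| - y k) ≤ 0 :=
      Finset.sum_nonpos fun k hk => by linarith [hN k (Finset.mem_Ico.1 hk).1]
    linarith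
  rw [Finset.sum_sub_distrib] at h3
  have h4 : ‖∑ k ∈ range n, x k‖ ≤ ∑ k ∈ range n, |x k| := Finset.abs_sum_le_sum_abs _ _
  linarith

/-- If moreover `log d_n = o(n^c)` a.s. with `2p/a < c < 1`, then the cumulative
prediction error satisfies `|C_n(q)/n - σ(2q)|² = o(n^{c-1})` a.s. -/
theorem cumulative_prediction_error_rate
    {Ω : Type*} {m0 : MeasurableSpace Ω} {μ : Measure Ω} [IsProbabilityMeasure μ]
    (F : Filtration ℕ m0) {d : ℕ} (hd : 0 < d)
    (ε : ℕ → Ω → ℝ) (Φ : ℕ → Ω → Fin d → ℝ) (X : ℕ → Ω → ℝ) (θ : Fin d → ℝ)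
    (S L : Matrix (Fin d) (Fin d) ℝ) (hS : S.PosDef) (hL : L.PosDef)
    (σ : ℝ) (p : ℕ) (hp : 1 ≤ p) (a : ℝ) (ha : 2 * p < a)
    (q : ℕ) (hq1 : 1 ≤ q) (hqp : q ≤ p) (σ2q : ℝ)
    (c : ℝ) (hc1 : 2 * p / a < c) (hc2 : c < 1)
    (α : ℕ → Ω → ℝ)
    (hmodel : ∀ n ω, X (n + 1) ω = θ ⬝ᵥ Φ n ω + ε (n + 1) ω)
    (hεadapt : ∀ n, StronglyMeasurable[F n] (ε n))
    (hεint : ∀ n, Integrable (ε n) μ)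
    (hΦadapt : ∀ n, StronglyMeasurable[F n] (Φ n))
    (hXadapt : ∀ n, StronglyMeasurable[F n] (X n))
    (hmds : ∀ n, μ[ε (n + 1)|F n] =ᵐ[μ] 0)
    (hvar : ∀ n, μ[fun ω => ε (n + 1) ω ^ 2|F n] =ᵐ[μ] fun _ => σ ^ 2)
    (hmomint : ∀ n, Integrable (fun ω => |ε (n + 1) ω| ^ a) μ)
    (hmom : ∀ᵐ ω ∂μ, ∃ C : ℝ, ∀ n, (μ[fun ω => |ε (n + 1) ω| ^ a|F n]) ω ≤ C)
    (hmom2q : ∀ n, μ[fun ω => ε (n + 1) ω ^ (2 * q)|F n] =ᵐ[μ] fun _ => σ2q)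
    (hf0 : ∀ᵐ ω ∂μ, Tendsto (fun n => expl S Φ n ω) atTop (𝓝 0))
    (hαmeas : ∀ n, Measurable (α n))
    (hαpos : ∀ n ω, 0 < α n ω)
    (hαmono : ∀ᵐ ω ∂μ, Monotone fun n => α n ω)
    (hαtop : ∀ᵐ ω ∂μ, Tendsto (fun n => α n ω) atTop atTop)
    (hconv : ∀ᵐ ω ∂μ, Tendsto (fun n => (α n ω)⁻¹ • Smat S Φ n ω) atTop (𝓝 L))
    (hlog : ∀ᵐ ω ∂μ, (fun n => Real.log ((Smat S Φ n ω).det)) =o[atTop]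
      fun n : ℕ => (n : ℝ) ^ c) :
    let C : ℕ → Ω → ℝ := fun n ω =>
      ∑ k ∈ Finset.range n, (X (k + 1) ω - lsq S Φ X k ω ⬝ᵥ Φ k ω) ^ (2 * q)
    ∀ᵐ ω ∂μ, (fun n : ℕ => |C n ω / n - σ2q| ^ 2) =o[atTop]
      fun n : ℕ => (n : ℝ) ^ (c - 1) := by
  intro C
  obtain ⟨Q, rfl⟩ : ∃ Q, q = Q + 1 := ⟨q - 1, by omega⟩
  have hQp : ((Q:ℝ) + 1) ≤ p := by exact_mod_cast hqp
  have hp0 : (0:ℝ) < p := by exact_mod_cast hp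
  have ha0 : 0 < a := by linarith
  have hc0 : 0 < c := lt_trans (by positivity) hc1
  have hΦm : ∀ i k, i ≤ k → StronglyMeasurable[F k] (Φ i) := fun i k h => (hΦadapt i).mono (F.mono h)
  have hdot : ∀ k (f g : Ω → Fin d → ℝ), StronglyMeasurable[F k] f → StronglyMeasurable[F k] g →
      StronglyMeasurable[F k] fun ω => f ω ⬝ᵥ g ω := by
    intro k f g hf hg
    have : Continuous fun z : (Fin d → ℝ) × (Fin d → ℝ) => z.1 ⬝ᵥ z.2 := by
      unfold dotProduct; fun_prop
    exact this.comp_stronglyMeasurable (hf.prodMk hg)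
  have hsm : ∀ n k, n ≤ k + 1 → StronglyMeasurable[F k] fun ω => tS S (fun j => Φ j ω) n := by
    intro n k hnk
    unfold tS
    refine stronglyMeasurable_const.add ?_
    refine Finset.stronglyMeasurable_fun_sum _ fun i hi => ?_
    have := Finset.mem_range.1 hi
    exact hdot _ _ _ (hΦm i k (by omega)) (hΦm i k (by omega))
  have hMm : ∀ k, StronglyMeasurable[F k] fun ω =>
      Mv S θ (fun j => Φ j ω) (fun j => ε (j + 1) ω) k := by
    intro k
    unfold Mv
    refine stronglyMeasurable_const.add ?_
    refine Finset.stronglyMeasurable_fun_sum _ fun i hi => ?_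
    have := Finset.mem_range.1 hi
    exact ((hεadapt (i + 1)).mono (F.mono (by omega))).smul (hΦm i k (by omega))
  have hsp : ∀ ω k, 0 < tS S (fun j => Φ j ω) k := fun ω k => tS_pos hd hS _ k
  have hss : ∀ ω k, tS S (fun j => Φ j ω) (k + 1) = tS S (fun j => Φ j ω) k + Φ k ω ⬝ᵥ Φ k ω :=
    fun ω k => tS_succ S _ k
  have hcore := core (μ := μ) F Q (fun n => ε (n + 1))
    (fun k ω => (Φ k ω ⬝ᵥ Φ k ω) / tS S (fun j => Φ j ω) (k + 1))
    (fun k ω => (Mv S θ (fun j => Φ j ω) (fun j => ε (j + 1) ω) k ⬝ᵥ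
      Mv S θ (fun j => Φ j ω) (fun j => ε (j + 1) ω) k) / tS S (fun j => Φ j ω) k)
    (fun k ω => (Φ k ω ⬝ᵥ Mv S θ (fun j => Φ j ω) (fun j => ε (j + 1) ω) k)
      / tS S (fun j => Φ j ω) (k + 1)) σ σ2q a c (by linarith)
    (lt_of_le_of_lt (by gcongr) hc1) hc2 (fun n => hεadapt (n + 1)) (fun n => hεint (n + 1))
    hmomint hmds hvar hmom2q hmom
    (fun k => (hdot _ _ _ (hΦadapt k) (hΦadapt k)).div₀ (hsm _ _ le_rfl) fun ω => (hsp ω _).ne')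
    (fun k => (hdot _ _ _ (hMm k) (hMm k)).div₀ (hsm k _ (by omega)) fun ω => (hsp ω _).ne')
    (fun k => (hdot _ _ _ (hΦadapt k) (hMm k)).div₀ (hsm _ _ le_rfl) fun ω => (hsp ω _).ne')
    (fun k ω => div_nonneg (dot_self_nn _) (hsp ω _).le)
    (fun k ω => by
      rw [div_le_one (hsp ω _), hss]
      linarith [hsp ω k])
    (fun k ω => div_nonneg (dot_self_nn _) (hsp ω _).le)
    (fun k ω => u_le _ _ (hsp ω k) _ _ (hss ω k))
    (fun k ω => by
      rw [Mv_succ]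
      exact rec_eq _ _ _ (hsp ω k) _ _ (hss ω k))
    (by
      have : (fun ω => ((Mv S θ (fun j => Φ j ω) (fun j => ε (j + 1) ω) 0 ⬝ᵥ
          Mv S θ (fun j => Φ j ω) (fun j => ε (j + 1) ω) 0) / tS S (fun j => Φ j ω) 0) ^ (Q + 1))
          = fun _ : Ω => (((-(S *ᵥ θ)) ⬝ᵥ (-(S *ᵥ θ))) / S.trace) ^ (Q + 1) := by
        funext ω
        simp [Mv, tS]
      rw [this]
      exact integrable_const _)
    (by
      filter_upwards [hconv, hlog] with ω h1 h2
      exact path_a hd hS hL (fun j => Φ j ω) (fun n => α n ω) (fun n => hαpos n ω) h1 hc0 h2)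
  filter_upwards [hcore, hconv, hf0] with ω ⟨k1, k2, k3⟩ h1 h2
  obtain ⟨B, hB, hev⟩ := path_b hd hS hL (fun j => Φ j ω) (fun n => α n ω) (fun n => hαpos n ω) h1 h2
  refine final_rate ?_
  have hβ : 0 < (1 + c) / 2 := by linarith
  set g : ℕ → ℝ := fun k => (Φ k ω ⬝ᵥ Φ k ω) / tS S (fun j => Φ j ω) (k + 1) with hg
  set W : ℕ → ℝ := fun k => (Mv S θ (fun j => Φ j ω) (fun j => ε (j + 1) ω) k ⬝ᵥ
      Mv S θ (fun j => Φ j ω) (fun j => ε (j + 1) ω) k) / tS S (fun j => Φ j ω) k with hW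
  have hg0 : ∀ k, 0 ≤ g k := fun k => div_nonneg (dot_self_nn _) (hsp ω _).le
  have hg1 : ∀ k, g k ≤ 1 := fun k => by
    simp only [hg]
    rw [div_le_one (hsp ω _), hss]
    linarith [hsp ω k]
  have hW0 : ∀ k, 0 ≤ W k := fun k => div_nonneg (dot_self_nn _) (hsp ω _).le
  set K : ℝ := 2 ^ (2 * (Q + 1)) with hK
  have hK0 : 0 ≤ K := by positivity
  have hy := (k2.const_mul_left (K * √B)).add (k1.const_mul_left (K * B ^ (Q + 1)))
  have hy' : (fun n => ∑ k ∈ range n, (K * √B * (√(g k * W k) * |ε (k + 1) ω| ^ (2 * Q + 1))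
      + K * B ^ (Q + 1) * (g k * W k ^ (Q + 1)))) =o[atTop]
      fun n : ℕ => (n:ℝ) ^ ((1 + c) / 2) := by
    refine hy.congr_left fun n => ?_
    rw [Finset.sum_add_distrib, Finset.mul_sum, Finset.mul_sum]
  have hx := final_sum (x := fun k => (X (k + 1) ω - lsq S Φ X k ω ⬝ᵥ Φ k ω) ^ (2 * (Q + 1))
      - ε (k + 1) ω ^ (2 * (Q + 1))) hβ ?_ hy'
  · refine (hx.add k3).congr_left fun n => ?_
    simp only [Finset.sum_sub_distrib, C]
    simp
  · filter_upwards [hev, eventually_ge_atTop 1] with k hk hk1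
    obtain ⟨n, rfl⟩ : ∃ n, k = n + 1 := ⟨k - 1, by omega⟩
    rw [lsq_pred hS Φ X ε θ hmodel n ω]
    refine (pow_diff Q _ _).trans ?_
    have hk2 := hk (Mv S θ (fun j => Φ j ω) (fun j => ε (j + 1) ω) (n + 1))
    simp only [Nat.add_sub_cancel] at hk2
    set π : ℝ := -(((Sd S (fun k => Φ k ω) n)⁻¹ *ᵥ
          Mv S θ (fun k => Φ k ω) (fun k => ε (k + 1) ω) (n + 1)) ⬝ᵥ Φ (n + 1) ω) with hπ
    have hπ2 : π ^ 2 ≤ B * (g (n + 1) * W (n + 1)) := by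
      rw [hπ, neg_sq]; exact hk2
    have hπ1 : |π| ≤ √B * √(g (n + 1) * W (n + 1)) := by
      rw [← Real.sqrt_mul hB]
      exact Real.abs_le_sqrt hπ2
    have hπ3 : |π| ^ (2 * (Q + 1)) ≤ B ^ (Q + 1) * (g (n + 1) * W (n + 1) ^ (Q + 1)) := by
      rw [pow_mul, sq_abs]
      refine (pow_le_pow_left₀ (sq_nonneg π) hπ2 (Q + 1)).trans ?_
      rw [mul_pow, mul_pow]
      have h3 : g (n + 1) ^ (Q + 1) ≤ g (n + 1) :=
        pow_le_of_le_one (hg0 _) (hg1 _) (by omega)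
      have h4 := hW0 (n + 1)
      gcongr
    have h5 : |π| * |ε (n + 1 + 1) ω| ^ (2 * Q + 1)
        ≤ √B * √(g (n + 1) * W (n + 1)) * |ε (n + 1 + 1) ω| ^ (2 * Q + 1) := by gcongr
    calc _ ≤ K * (√B * √(g (n + 1) * W (n + 1)) * |ε (n + 1 + 1) ω| ^ (2 * Q + 1)
          + B ^ (Q + 1) * (g (n + 1) * W (n + 1) ^ (Q + 1))) := by
          gcongr
      _ = _ := by ring
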